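/- arXiv:1203.5859 — 3 statements merged into one kernel-verified Lean document; each statement's English description precedes it below -/
import Mathlib

section
/- (Hamburger) For a real sequence (s_k)_{k≥0}, there exists a (nonnegative Borel) measure σ on ℝ with infinite support such that ∫_ℝ |u|^k dσ(u) < ∞ and s_k = ∫_ℝ u^k dσ(u) for all k ≥ 0, if and only if (s_k) is strictly positive, i.e., for every m ∈ ℕ and every nonzero vector (x_0,…,x_m) ∈ ℝ^{m+1}, ∑_{i,j=0}^m x_i x_j s_{i+j} > 0. -/
/-!
Let `L` be the linear functional on `ℝ[X]` with `L (X ^ k) = s k`. The Hankel forms of `s` are the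
values `L (p ^ 2)`, so for the moments of `σ` they are `∫ p ^ 2 ∂σ`, which is positive for all
`p ≠ 0` exactly when no finite set carries `σ`. Conversely, a nonnegative real polynomial is a sum
of squares, so `L` is nonnegative on nonnegative polynomials. Such an `L` extends to a positive
functional on the continuous functions of polynomial growth, whose restriction to compactly
supported functions is integration against a measure. No mass is lost at infinity: the part of `f`
where `|x| > n` is at most `|x * f| / n`.
-/

open MeasureTheory

/-- A real sequence `s` is strictly positive if all its Hankel quadratic forms are
positive definite: they are strictly positive at every nonzero vector `(x 0, …, x m)`. -/
def IsStrictPosSeq (s : ℕ → ℝ) : Prop :=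
  ∀ (m : ℕ) (x : ℕ → ℝ), (∃ i ≤ m, x i ≠ 0) →
    0 < ∑ i ∈ Finset.range (m + 1), ∑ j ∈ Finset.range (m + 1), x i * x j * s (i + j)

open Polynomial Filter Topology CompactlySupported LatticeOrderedAddCommGroup

section SumsOfSquares

theorem X_sub_C_sq_dvd_sub_C_eval {R : Type*} [CommRing R] {p : R[X]} {a : R}
    (ha : p.derivative.IsRoot a) :
    (X - C a) ^ 2 ∣ p - C (p.eval a) := by
  by_cases hconst : p - C (p.eval a) = 0
  · simp [hconst]
  · rw [← le_rootMultiplicity_iff hconst]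
    exact (one_lt_rootMultiplicity_iff_isRoot hconst).2 ⟨by simp, by simpa using ha⟩

/-- Here `c` is the minimum of `p`, and `p - C c` has a double root wherever it is attained. -/
theorem exists_eq_X_sub_C_sq_mul_add_C {p : ℝ[X]} (hp : ∀ x, 0 ≤ p.eval x) :
    ∃ (a c : ℝ) (q : ℝ[X]), 0 ≤ c ∧ (∀ x, 0 ≤ q.eval x) ∧ p = (X - C a) ^ 2 * q + C c := by
  obtain ⟨a, ha⟩ := p.exists_forall_norm_le
  have hmin : ∀ x, p.eval a ≤ p.eval x := fun x => by
    simpa only [Real.norm_of_nonneg (hp _)] using ha x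
  have hderiv : p.derivative.IsRoot a :=
    IsLocalMin.hasDerivAt_eq_zero (Eventually.of_forall hmin) (p.hasDerivAt a)
  obtain ⟨q, hq⟩ := X_sub_C_sq_dvd_sub_C_eval hderiv
  have hpq : p = (X - C a) ^ 2 * q + C (p.eval a) := sub_eq_iff_eq_add.1 hq
  refine ⟨a, p.eval a, q, hp a, ?_, hpq⟩
  refine (dense_compl_singleton a).induction (fun x hx => ?_)
    (isClosed_le continuous_const q.continuous)
  have hsq : 0 < (x - a) ^ 2 := sq_pos_of_ne_zero (sub_ne_zero.2 hx)
  have heval : p.eval x - p.eval a = (x - a) ^ 2 * q.eval x := by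
    simpa using congrArg (eval x) hq
  exact nonneg_of_mul_nonneg_right (heval ▸ sub_nonneg.2 (hmin x)) hsq

theorem isSumSq_of_forall_eval_nonneg {p : ℝ[X]} (hp : ∀ x, 0 ≤ p.eval x) : IsSumSq p := by
  induction hn : p.natDegree using Nat.strong_induction_on generalizing p with
  | _ n ih =>
    obtain ⟨a, c, q, hc, hq, rfl⟩ := exists_eq_X_sub_C_sq_mul_add_C hp
    have hC : IsSumSq (C c : ℝ[X]) := by
      rw [← Real.mul_self_sqrt hc, C_mul]
      exact .mul_self _
    rcases eq_or_ne q 0 with rfl | hq0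
    · simpa using hC
    · have hdeg : q.natDegree < n := by
        rw [← hn, natDegree_add_C, natDegree_mul (pow_ne_zero 2 (X_sub_C_ne_zero a)) hq0,
          natDegree_pow, natDegree_X_sub_C]
        lia
      exact ((IsSquare.sq _).isSumSq.mul (ih _ hdeg hq rfl)).add hC

theorem map_nonneg_of_isSumSq {F A M : Type*} [AddZeroClass A] [Mul A] [AddMonoid M]
    [Preorder M] [AddLeftMono M] [FunLike F A M] [AddMonoidHomClass F A M] {L : F}
    (hL : ∀ a, 0 ≤ L (a * a)) {a : A} (ha : IsSumSq a) : 0 ≤ L a := by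
  induction ha with
  | zero => simp
  | sq_add b _ ih => simpa using add_nonneg (hL b) ih

end SumsOfSquares

section Extension

/-- Kantorovich's extension theorem for positive functionals. -/
theorem exists_positiveLinearMap_comp_eq {V E : Type*} [AddCommGroup V] [Module ℝ V]
    [AddCommGroup E] [PartialOrder E] [IsOrderedAddMonoid E] [Module ℝ E] [PosSMulMono ℝ E]
    (ι : V →ₗ[ℝ] E) (hι : ∀ w, ∃ v, w ≤ ι v) (L : V →ₗ[ℝ] ℝ) (hL : ∀ v, 0 ≤ ι v → 0 ≤ L v) :
    ∃ Λ : E →ₚ[ℝ] ℝ, ∀ v, Λ (ι v) = L v := by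
  have hker : ∀ v, ι v = 0 → L v = 0 := fun v hv =>
    le_antisymm (by simpa using hL (-v) (by simp [hv])) (hL v hv.ge)
  obtain ⟨r, hr⟩ := ι.rangeRestrict.exists_rightInverse_of_surjective ι.range_rangeRestrict
  have hιr : ∀ w : LinearMap.range ι, ι (r w) = w := fun w =>
    congrArg Subtype.val (LinearMap.congr_fun hr w)
  obtain ⟨g, hgL, hg⟩ := riesz_extension (PointedCone.positive ℝ E) ⟨LinearMap.range ι, L ∘ₗ r⟩
    (fun w hw => hL (r w) ((hιr w).symm ▸ hw)) fun w => by
      obtain ⟨v, hv⟩ := hι (-w)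
      exact ⟨⟨ι v, v, rfl⟩, neg_le_iff_add_nonneg.1 hv⟩
  refine ⟨PositiveLinearMap.mk₀ g hg, fun v => ?_⟩
  have hrv : L (r (ι.rangeRestrict v) - v) = 0 :=
    hker _ (by rw [map_sub, hιr, LinearMap.codRestrict_apply, sub_self])
  rw [map_sub, sub_eq_zero] at hrv
  exact (hgL (ι.rangeRestrict v)).trans hrv

end Extension

section Truncation

variable {X : Type*} [TopologicalSpace X] {v : C(X, ℝ)}

/-- The continuous cutoff that is `1` where `|v| ≤ n` and `0` where `n + 1 ≤ |v|`. -/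
def cutoff (v : C(X, ℝ)) (n : ℕ) : C(X, ℝ) where
  toFun x := max 0 (min 1 (n + 1 - |v x|))

theorem cutoff_nonneg (v : C(X, ℝ)) (n : ℕ) (x : X) : 0 ≤ cutoff v n x := le_max_left _ _

theorem cutoff_le_one (v : C(X, ℝ)) (n : ℕ) (x : X) : cutoff v n x ≤ 1 :=
  max_le zero_le_one (min_le_left _ _)

theorem cutoff_eq_one {n : ℕ} {x : X} (hx : |v x| ≤ n) : cutoff v n x = 1 := by
  change max 0 (min 1 (n + 1 - |v x|)) = 1
  rw [min_eq_left (by linarith), max_eq_right zero_le_one]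

theorem hasCompactSupport_cutoff (hv : IsProperMap v) (n : ℕ) : HasCompactSupport (cutoff v n) := by
  refine .intro' (hv.isCompact_preimage (isCompact_Icc (a := -(n + 1 : ℝ)) (b := n + 1)))
    (isClosed_Icc.preimage hv.continuous) fun x hx => max_eq_left ((min_le_right _ _).trans ?_)
  rw [Set.mem_preimage, Set.mem_Icc, ← abs_le] at hx
  linarith

theorem natCast_mul_one_sub_cutoff_le (v : C(X, ℝ)) (n : ℕ) (x : X) :
    n * (1 - cutoff v n x) ≤ |v x| := by
  rcases le_total |v x| n with hx | hx
  · simp [cutoff_eq_one hx]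
  · exact (mul_le_of_le_one_right n.cast_nonneg (by linarith [cutoff_nonneg v n x])).trans hx

/-- The product of `f` with the `n`-th cutoff of the proper map `v`. -/
def truncate (hv : IsProperMap v) (n : ℕ) (f : C(X, ℝ)) : C_c(X, ℝ) where
  toContinuousMap := f * cutoff v n
  hasCompactSupport' := (hasCompactSupport_cutoff hv n).mul_left

variable (hv : IsProperMap v) (n : ℕ) (f : C(X, ℝ)) (x : X)

theorem truncate_apply : truncate hv n f x = f x * cutoff v n x := rfl

theorem abs_truncate_le : |truncate hv n f x| ≤ |f x| := by
  rw [truncate_apply, abs_mul, abs_of_nonneg (cutoff_nonneg v n x)]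
  exact mul_le_of_le_one_right (abs_nonneg _) (cutoff_le_one v n x)

theorem natCast_mul_abs_truncate_sub_le : n * |truncate hv n f x - f x| ≤ |f x * v x| := by
  have hsub : truncate hv n f x - f x = -(f x * (1 - cutoff v n x)) := by
    rw [truncate_apply]; ring
  rw [hsub, abs_neg, abs_mul, abs_mul, abs_of_nonneg (sub_nonneg.2 (cutoff_le_one v n x)),
    mul_left_comm]
  exact mul_le_mul_of_nonneg_left (natCast_mul_one_sub_cutoff_le v n x) (abs_nonneg _)

theorem tendsto_truncate : Tendsto (fun n => truncate hv n f x) atTop (𝓝 (f x)) := by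
  refine tendsto_const_nhds.congr' ?_
  filter_upwards [eventually_ge_atTop ⌈|v x|⌉₊] with n hn
  rw [truncate_apply, cutoff_eq_one (Nat.ceil_le.1 hn), mul_one]

end Truncation

section Representation

variable {X : Type*} [TopologicalSpace X] {S : Subalgebra ℝ C(X, ℝ)}

theorem compactlySupported_mem_of_isSolid (hS : IsSolid (S : Set C(X, ℝ))) (f : C_c(X, ℝ)) :
    (f : C(X, ℝ)) ∈ S := by
  obtain ⟨c, hc⟩ := f.hasCompactSupport.exists_bound_of_continuous f.continuous
  refine hS (S.algebraMap_mem c) fun x => ?_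
  exact (hc x).trans (le_abs_self c)

/-- Compactly supported functions as elements of a solid subalgebra. -/
def compactlySupportedInclusion (hS : IsSolid (S : Set C(X, ℝ))) : C_c(X, ℝ) →ₗ[ℝ] S where
  toFun f := ⟨f, compactlySupported_mem_of_isSolid hS f⟩
  map_add' _ _ := rfl
  map_smul' _ _ := rfl

theorem tendsto_map_truncate (hS : IsSolid (S : Set C(X, ℝ))) (Λ : S →ₚ[ℝ] ℝ) {v : C(X, ℝ)}
    (hvS : v ∈ S) (hv : IsProperMap v) (f : S) :
    Tendsto (fun n => Λ (compactlySupportedInclusion hS (truncate hv n f))) atTop (𝓝 (Λ f)) := by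
  let b : S := ⟨|f * v|, hS (mul_mem f.2 hvS) (abs_abs _).le⟩
  have hbound : ∀ n : ℕ,
      n * |Λ (compactlySupportedInclusion hS (truncate hv n f)) - Λ f| ≤ Λ b := fun n => by
    set d : S := (n : ℝ) • (compactlySupportedInclusion hS (truncate hv n f) - f)
    have hd : ∀ x, |(d : C(X, ℝ)) x| ≤ (b : C(X, ℝ)) x := fun x => by
      change |n * (truncate hv n f x - (f : C(X, ℝ)) x)| ≤ |(f : C(X, ℝ)) x * v x|
      rw [abs_mul, Nat.abs_cast]
      exact natCast_mul_abs_truncate_sub_le hv n f x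
    have hΛd : Λ d = n * (Λ (compactlySupportedInclusion hS (truncate hv n f)) - Λ f) := by
      rw [map_smul, map_sub, smul_eq_mul]
    rw [← Nat.abs_cast n, ← abs_mul, ← hΛd, abs_le', ← map_neg]
    exact ⟨Λ.monotone' fun x => le_of_abs_le (hd x),
      Λ.monotone' fun x => neg_le.1 (neg_le_of_abs_le (hd x))⟩
  refine tendsto_iff_norm_sub_tendsto_zero.2 (squeeze_zero' (.of_forall fun n => norm_nonneg _) ?_
    (tendsto_const_div_atTop_nhds_zero_nat (Λ b)))
  filter_upwards [eventually_gt_atTop 0] with n hn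
  rw [le_div_iff₀' (by exact_mod_cast hn)]
  exact hbound n

variable [MeasurableSpace X] [BorelSpace X] {μ : Measure X} [IsFiniteMeasureOnCompacts μ]

theorem integrable_of_integral_eq_map (hS : IsSolid (S : Set C(X, ℝ))) {Λ : S →ₚ[ℝ] ℝ}
    {v : C(X, ℝ)} (hv : IsProperMap v)
    (hμ : ∀ f, ∫ x, f x ∂μ = Λ (compactlySupportedInclusion hS f)) (f : S) :
    Integrable (f : C(X, ℝ)) μ := by
  let K : ℕ → Set X := fun n => v ⁻¹' Set.Icc (-n) n
  have hK : ∀ n, IsCompact (K n) := fun n => hv.isCompact_preimage isCompact_Icc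
  have hcover : AECover μ atTop K :=
    { ae_eventually_mem := ae_of_all _ fun x => by
        filter_upwards [eventually_ge_atTop ⌈|v x|⌉₊] with n hn
        exact abs_le.1 (Nat.ceil_le.1 hn)
      measurableSet := fun n => (map_continuous v).measurable measurableSet_Icc }
  let absf : S := ⟨|f|, hS f.2 (abs_abs _).le⟩
  refine hcover.integrable_of_integral_norm_bounded (Λ absf)
    (fun n => (map_continuous _).continuousOn.integrableOn_compact' (hK n)
      (hcover.measurableSet n)) (.of_forall fun n => ?_)
  have htrunc : Integrable (truncate hv n absf) μ :=
    (map_continuous _).integrable_of_hasCompactSupport (truncate hv n absf).hasCompactSupport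
  calc ∫ x in K n, ‖(f : C(X, ℝ)) x‖ ∂μ
      = ∫ x in K n, truncate hv n absf x ∂μ :=
        setIntegral_congr_fun (hcover.measurableSet n) fun x hx => by
          rw [truncate_apply, cutoff_eq_one (abs_le.2 hx), mul_one, Real.norm_eq_abs,
            ContinuousMap.abs_apply]
    _ ≤ ∫ x, truncate hv n absf x ∂μ :=
        setIntegral_le_integral htrunc
          (ae_of_all _ fun x => mul_nonneg (abs_nonneg _) (cutoff_nonneg v n x))
    _ = Λ (compactlySupportedInclusion hS (truncate hv n absf)) := hμ _
    _ ≤ Λ absf := Λ.monotone' fun x =>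
        mul_le_of_le_one_right (abs_nonneg _) (cutoff_le_one v n x)

theorem integral_eq_map_of_forall_compactlySupported (hS : IsSolid (S : Set C(X, ℝ)))
    {Λ : S →ₚ[ℝ] ℝ} {v : C(X, ℝ)} (hvS : v ∈ S) (hv : IsProperMap v)
    (hμ : ∀ f, ∫ x, f x ∂μ = Λ (compactlySupportedInclusion hS f)) (f : S) :
    ∫ x, (f : C(X, ℝ)) x ∂μ = Λ f := by
  have hlim : Tendsto (fun n => ∫ x, truncate hv n f x ∂μ) atTop (𝓝 (∫ x, (f : C(X, ℝ)) x ∂μ)) :=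
    tendsto_integral_of_dominated_convergence _
      (fun n => (map_continuous (truncate hv n (f : C(X, ℝ)))).aestronglyMeasurable)
      (integrable_of_integral_eq_map hS hv hμ f).norm
      (fun n => ae_of_all _ (abs_truncate_le hv n f)) (ae_of_all _ (tendsto_truncate hv f))
  simp only [hμ] at hlim
  exact tendsto_nhds_unique hlim (tendsto_map_truncate hS Λ hvS hv f)

theorem exists_measure_of_isSolid [T2Space X] [LocallyCompactSpace X]
    (hS : IsSolid (S : Set C(X, ℝ))) (Λ : S →ₚ[ℝ] ℝ) {v : C(X, ℝ)} (hvS : v ∈ S)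
    (hv : IsProperMap v) :
    ∃ μ : Measure X, ∀ f : S, Integrable (f : C(X, ℝ)) μ ∧ ∫ x, (f : C(X, ℝ)) x ∂μ = Λ f := by
  let Λc : C_c(X, ℝ) →ₚ[ℝ] ℝ :=
    .mk₀ (Λ.toLinearMap ∘ₗ compactlySupportedInclusion hS) fun f hf => map_nonneg Λ hf
  have hμ : ∀ f, ∫ x, f x ∂(RealRMK.rieszMeasure Λc) = Λ (compactlySupportedInclusion hS f) :=
    RealRMK.integral_rieszMeasure Λc
  exact ⟨RealRMK.rieszMeasure Λc, fun f => ⟨integrable_of_integral_eq_map hS hv hμ f,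
    integral_eq_map_of_forall_compactlySupported hS hvS hv hμ f⟩⟩

end Representation

section Haviland

variable {X A : Type*} [TopologicalSpace X] [Ring A] [Algebra ℝ A] (φ : A →ₐ[ℝ] C(X, ℝ))

/-- The algebra of continuous functions dominated in absolute value by some `φ a`; for polynomials
these are the continuous functions of polynomial growth. -/
def majorized : Subalgebra ℝ C(X, ℝ) where
  carrier := {f | ∃ a, ∀ x, |f x| ≤ φ a x}
  add_mem' := by
    rintro f h ⟨a, ha⟩ ⟨b, hb⟩
    refine ⟨a + b, fun x => ?_⟩
    rw [map_add]
    exact (abs_add_le _ _).trans (add_le_add (ha x) (hb x))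
  mul_mem' := by
    rintro f h ⟨a, ha⟩ ⟨b, hb⟩
    refine ⟨a * b, fun x => ?_⟩
    rw [map_mul, ContinuousMap.mul_apply, abs_mul]
    exact mul_le_mul (ha x) (hb x) (abs_nonneg _) ((abs_nonneg _).trans (ha x))
  algebraMap_mem' c := ⟨algebraMap ℝ A |c|, fun x => by simp [AlgHom.commutes]⟩

theorem isSolid_majorized : IsSolid (majorized φ : Set C(X, ℝ)) := by
  rintro f ⟨a, ha⟩ h hhf
  exact ⟨a, fun x => (hhf x).trans (ha x)⟩

theorem map_mem_majorized (a : A) : φ a ∈ majorized φ := by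
  refine ⟨1 + a * a, fun x => ?_⟩
  rw [map_add, map_one, map_mul]
  change |φ a x| ≤ 1 + φ a x * φ a x
  rw [abs_le]
  constructor <;> nlinarith [sq_nonneg (φ a x - 1), sq_nonneg (φ a x + 1)]

theorem exists_positiveLinearMap_majorized (L : A →ₗ[ℝ] ℝ) (hL : ∀ a, 0 ≤ φ a → 0 ≤ L a) :
    ∃ Λ : majorized φ →ₚ[ℝ] ℝ, ∀ a, Λ ⟨φ a, map_mem_majorized φ a⟩ = L a := by
  have : PosSMulMono ℝ (majorized φ) :=
    ⟨fun c hc f h hfh => smul_le_smul_of_nonneg_left (β := C(X, ℝ)) hfh hc⟩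
  refine exists_positiveLinearMap_comp_eq
    (φ.codRestrict (majorized φ) (map_mem_majorized φ)).toLinearMap ?_ L hL
  rintro ⟨f, a, ha⟩
  exact ⟨a, fun x => le_of_abs_le (ha x)⟩

/-- The Haviland–Marshall theorem; Haviland's is the case of polynomials on `ℝⁿ`. -/
theorem exists_measure_of_forall_nonneg [T2Space X] [LocallyCompactSpace X] [MeasurableSpace X]
    [BorelSpace X] {a₀ : A} (ha₀ : IsProperMap (φ a₀)) (L : A →ₗ[ℝ] ℝ)
    (hL : ∀ a, 0 ≤ φ a → 0 ≤ L a) :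
    ∃ μ : Measure X, ∀ a, Integrable (φ a) μ ∧ ∫ x, φ a x ∂μ = L a := by
  obtain ⟨Λ, hΛ⟩ := exists_positiveLinearMap_majorized φ L hL
  obtain ⟨μ, hμ⟩ :=
    exists_measure_of_isSolid (isSolid_majorized φ) Λ (map_mem_majorized φ a₀) ha₀
  exact ⟨μ, fun a => hΛ a ▸ hμ ⟨φ a, map_mem_majorized φ a⟩⟩

end Haviland

section Moments

/-- The linear functional on real polynomials that sends `X ^ k` to `s k`. -/
noncomputable def momentFunctional (s : ℕ → ℝ) : ℝ[X] →ₗ[ℝ] ℝ :=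
  (Polynomial.basisMonomials ℝ).constr ℝ s

theorem momentFunctional_monomial (s : ℕ → ℝ) (k : ℕ) (a : ℝ) :
    momentFunctional s (monomial k a) = a * s k := by
  have hk : momentFunctional s (monomial k 1) = s k := by
    simpa [momentFunctional] using (Polynomial.basisMonomials ℝ).constr_basis ℝ s k
  rw [← mul_one a, ← smul_eq_mul, ← smul_monomial, map_smul, hk, smul_eq_mul, smul_eq_mul, mul_one]

theorem momentFunctional_sum_monomial_mul_self (s x : ℕ → ℝ) (t : Finset ℕ) :
    momentFunctional s ((∑ i ∈ t, monomial i (x i)) * ∑ i ∈ t, monomial i (x i)) =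
      ∑ i ∈ t, ∑ j ∈ t, x i * x j * s (i + j) := by
  simp only [Finset.sum_mul_sum, map_sum, monomial_mul_monomial, momentFunctional_monomial]

theorem isStrictPosSeq_iff_momentFunctional_mul_self_pos {s : ℕ → ℝ} :
    IsStrictPosSeq s ↔ ∀ p ≠ 0, 0 < momentFunctional s (p * p) := by
  constructor
  · intro hs p hp
    have hpos := hs p.natDegree p.coeff ⟨p.natDegree, le_rfl, by simpa using hp⟩
    rwa [← momentFunctional_sum_monomial_mul_self, ← p.as_sum_range] at hpos
  · rintro hs m x ⟨i, him, hi⟩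
    rw [← momentFunctional_sum_monomial_mul_self]
    refine hs _ fun hp => hi ?_
    simpa [coeff_monomial, Nat.lt_succ_iff, him] using congrArg (coeff · i) hp

theorem momentFunctional_nonneg {s : ℕ → ℝ} (hs : IsStrictPosSeq s) {p : ℝ[X]}
    (hp : ∀ x, 0 ≤ p.eval x) : 0 ≤ momentFunctional s p := by
  refine map_nonneg_of_isSumSq (fun q => ?_) (isSumSq_of_forall_eval_nonneg hp)
  rcases eq_or_ne q 0 with rfl | hq
  · simp
  · exact (isStrictPosSeq_iff_momentFunctional_mul_self_pos.1 hs q hq).le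

theorem exists_measure_integral_eval_eq {L : ℝ[X] →ₗ[ℝ] ℝ}
    (hL : ∀ p : ℝ[X], (∀ x, 0 ≤ p.eval x) → 0 ≤ L p) :
    ∃ σ : Measure ℝ, ∀ p : ℝ[X], Integrable (p.eval ·) σ ∧ ∫ u, p.eval u ∂σ = L p := by
  have hX : IsProperMap (toContinuousMapAlgHom (X : ℝ[X])) := by
    convert isProperMap_id
    ext u
    simp
  exact exists_measure_of_forall_nonneg toContinuousMapAlgHom hX L hL

theorem moments_iff_integral_eval {s : ℕ → ℝ} {σ : Measure ℝ} :
    ((∀ k : ℕ, Integrable (fun u => |u| ^ k) σ) ∧ ∀ k : ℕ, ∫ u, u ^ k ∂σ = s k) ↔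
      ∀ p : ℝ[X], Integrable (p.eval ·) σ ∧ ∫ u, p.eval u ∂σ = momentFunctional s p := by
  constructor
  · rintro ⟨hint, hmom⟩ p
    have hpow : ∀ k : ℕ, Integrable (· ^ k) σ := fun k =>
      (hint k).mono' (continuous_pow k).aestronglyMeasurable
        (ae_of_all _ fun u => by rw [Real.norm_eq_abs, abs_pow])
    induction p using Polynomial.induction_on' with
    | add p q hp hq =>
      simp only [eval_add, map_add]
      exact ⟨hp.1.add hq.1, by rw [integral_add hp.1 hq.1, hp.2, hq.2]⟩
    | monomial k a =>
      simp only [eval_monomial, momentFunctional_monomial]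
      exact ⟨(hpow k).const_mul a, by rw [integral_const_mul, hmom]⟩
  · intro hσ
    refine ⟨fun k => ?_, fun k => ?_⟩
    · simpa using (hσ (X ^ k)).1.norm
    · simpa [X_pow_eq_monomial, momentFunctional_monomial] using (hσ (monomial k 1)).2

theorem forall_measure_compl_finset_ne_zero_iff {σ : Measure ℝ}
    (hσ : ∀ p : ℝ[X], Integrable (p.eval ·) σ) :
    (∀ S : Finset ℝ, σ (S : Set ℝ)ᶜ ≠ 0) ↔ ∀ p : ℝ[X], p ≠ 0 → 0 < ∫ u, (p * p).eval u ∂σ := by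
  have hroots : ∀ p : ℝ[X], p ≠ 0 →
      (0 < ∫ u, (p * p).eval u ∂σ ↔ σ (p.roots.toFinset : Set ℝ)ᶜ ≠ 0) := fun p hp => by
    have hsupp : Function.support (fun u => (p * p).eval u) = (p.roots.toFinset : Set ℝ)ᶜ := by
      ext u
      simp [hp]
    rw [integral_pos_iff_support_of_nonneg (fun u => by simpa using mul_self_nonneg _) (hσ _),
      hsupp, pos_iff_ne_zero]
  refine ⟨fun h p hp => (hroots p hp).2 (h _), fun h S => ?_⟩
  have hprod : ∏ a ∈ S, (X - C a) ≠ 0 := Finset.prod_ne_zero_iff.2 fun a _ => X_sub_C_ne_zero a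
  simpa [roots_prod_X_sub_C] using (hroots _ hprod).1 (h _ hprod)

end Moments

/-- **Hamburger's theorem.** A real sequence `s` is the moment sequence of a
nonnegative Borel measure on `ℝ` which is not supported on any finite set
(i.e. has an infinite number of points of increase) if and only if `s` is
strictly positive. -/
theorem hamburger_moment_problem (s : ℕ → ℝ) :
    (∃ σ : Measure ℝ,
        (∀ S : Finset ℝ, σ (↑S : Set ℝ)ᶜ ≠ 0) ∧
        (∀ k : ℕ, Integrable (fun u : ℝ => |u| ^ k) σ) ∧
        (∀ k : ℕ, ∫ u, u ^ k ∂σ = s k)) ↔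
      IsStrictPosSeq s := by
  simp_rw [moments_iff_integral_eval]
  constructor
  · rintro ⟨σ, hsupp, hσ⟩
    refine isStrictPosSeq_iff_momentFunctional_mul_self_pos.2 fun p hp => ?_
    rw [← (hσ (p * p)).2]
    exact (forall_measure_compl_finset_ne_zero_iff fun q => (hσ q).1).1 hsupp p hp
  · intro hs
    obtain ⟨σ, hσ⟩ := exists_measure_integral_eval_eq fun p => momentFunctional_nonneg hs (p := p)
    refine ⟨σ, (forall_measure_compl_finset_ne_zero_iff fun q => (hσ q).1).2 fun p hp => ?_, hσ⟩
    rw [(hσ (p * p)).2]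
    exact isStrictPosSeq_iff_momentFunctional_mul_self_pos.1 hs p hp
end

section
/- (Carleman) Let (s_k)_{k≥0} be a strictly positive real sequence such that ∑_{n=1}^∞ s_{2n}^{-1/(2n)} = ∞. Then the Hamburger moment problem for (s_k) is determinate: if σ₁ and σ₂ are measures on ℝ with ∫_ℝ |u|^k dσ_i(u) < ∞ and ∫_ℝ u^k dσ₁(u) = s_k = ∫_ℝ u^k dσ₂(u) for all k ≥ 0, then σ₁ = σ₂. -/
open MeasureTheory

/-!
If `σ₁` and `σ₂` have the same moments, then every derivative of `charFun σ₁ - charFun σ₂` vanishes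
at `0`, and its `n`-th derivative is bounded by the absolute moment `M n` of `σ₁ + σ₂`. The sequence
`M` is log-convex, so by the Denjoy–Carleman theorem the difference is zero once
`∑ M n / M (n + 1)` diverges. This divergence follows from the hypothesis: `M (2 * n)` is
twice `s (2 * n)`, and Carleman's inequality bounds the sum of the geometric means
`(M 0 / M n) ^ (1 / n)` of these ratios by a constant times the sum of the ratios.

The Denjoy–Carleman theorem is proved by Bang's method. Knowing that `‖f⁽ⁿ⁾(x)‖ ≤ M n * exp (n - k)`
for all `n`, Taylor's formula at `x` gives the same bounds with `k` replaced by `k - 1` throughout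
the interval of radius `M (k - 1) / (e * M k)`. At a flat point every `k` is allowed, and since the
radii have a divergent sum, every `k` is allowed at every point.
-/

open Filter Finset Real
open scoped ContDiff Nat Topology

section Taylor

variable {E : Type*} [NormedAddCommGroup E] [NormedSpace ℝ E]

lemma iteratedDeriv_iteratedDeriv (f : ℝ → E) (n j : ℕ) :
    iteratedDeriv j (iteratedDeriv n f) = iteratedDeriv (n + j) f := by
  simp only [iteratedDeriv_eq_iterate, ← Function.iterate_add_apply, add_comm n j]

variable [CompleteSpace E] {f : ℝ → E}

lemma norm_sub_taylor_le {n : ℕ} {C : ℝ} (hf : ContDiff ℝ n f)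
    (hC : ∀ y, ‖iteratedDeriv n f y‖ ≤ C) (x h : ℝ) :
    ‖f (x + h) - ∑ j ∈ range n, (h ^ j / j !) • iteratedDeriv j f x‖ ≤ |h| ^ n / n ! * C := by
  cases n with
  | zero => simpa using hC (x + h)
  | succ n =>
    have remainder : f (x + h) - ∑ j ∈ range (n + 1), (h ^ j / j !) • iteratedDeriv j f x =
        (n ! : ℝ)⁻¹ • ∫ t in (0 : ℝ)..1,
          (1 - t) ^ n • h ^ (n + 1) • iteratedDeriv (n + 1) f (x + t * h) := by
      have := map_add_eq_sum_add_integral_iteratedFDeriv (x := x) (y := h)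
        fun t _ ↦ hf.contDiffAt (x := x + t • h)
      simpa [iteratedFDeriv_apply_eq_iteratedDeriv_mul_prod, smul_smul, sub_eq_iff_eq_add',
        div_eq_inv_mul] using this
    have integrand_le : ∀ t ∈ Set.Ioc (0 : ℝ) 1,
        ‖(1 - t) ^ n • h ^ (n + 1) • iteratedDeriv (n + 1) f (x + t * h)‖ ≤
          (1 - t) ^ n * (|h| ^ (n + 1) * C) := fun t ht ↦ by
      rw [norm_smul, norm_smul, norm_pow, norm_pow, norm_of_nonneg (sub_nonneg.2 ht.2),
        norm_eq_abs h]
      gcongr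
      · exact pow_nonneg (sub_nonneg.2 ht.2) n
      · exact hC _
    have weight : ∫ t in (0 : ℝ)..1, (1 - t) ^ n = ((n : ℝ) + 1)⁻¹ := by
      simp [intervalIntegral.integral_comp_sub_left (fun t ↦ t ^ n)]
    rw [remainder, norm_smul, norm_of_nonneg (by positivity)]
    calc (n ! : ℝ)⁻¹ * ‖∫ t in (0 : ℝ)..1,
          (1 - t) ^ n • h ^ (n + 1) • iteratedDeriv (n + 1) f (x + t * h)‖
        ≤ (n ! : ℝ)⁻¹ * ∫ t in (0 : ℝ)..1, (1 - t) ^ n * (|h| ^ (n + 1) * C) := by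
          gcongr
          exact intervalIntegral.norm_integral_le_of_norm_le zero_le_one
            (.of_forall integrand_le) (Continuous.intervalIntegrable (by fun_prop) _ _)
      _ = |h| ^ (n + 1) / (n + 1)! * C := by
          rw [intervalIntegral.integral_mul_const, weight, Nat.factorial_succ]
          push_cast
          field_simp

lemma norm_iteratedDeriv_add_le {m n : ℕ} {C : ℝ} (hf : ContDiff ℝ ∞ f)
    (hC : ∀ y, ‖iteratedDeriv (n + m) f y‖ ≤ C) (x h : ℝ) :
    ‖iteratedDeriv n f (x + h)‖ ≤
      ∑ j ∈ range m, |h| ^ j / j ! * ‖iteratedDeriv (n + j) f x‖ + |h| ^ m / m ! * C := by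
  have hfn : ContDiff ℝ m (iteratedDeriv n f) := by
    rw [iteratedDeriv_eq_iterate]
    exact (hf.iterate_deriv n).of_le (mod_cast le_top)
  have taylor := norm_sub_taylor_le hfn (by simpa only [iteratedDeriv_iteratedDeriv] using hC) x h
  simp only [iteratedDeriv_iteratedDeriv] at taylor
  have polynomial_le := norm_sum_le (range m) fun j ↦ (h ^ j / j ! : ℝ) • iteratedDeriv (n + j) f x
  simp only [norm_smul, norm_div, norm_pow, norm_eq_abs, Nat.abs_cast] at polynomial_le
  linarith [norm_le_norm_add_norm_sub' (iteratedDeriv n f (x + h))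
    (∑ j ∈ range m, (h ^ j / j ! : ℝ) • iteratedDeriv (n + j) f x)]

end Taylor

/-- Logarithmic convexity of a sequence of nonnegative reals, written without logarithms or
quotients so that it also makes sense where the sequence vanishes. It is the regularity condition on
the weights in the Denjoy–Carleman theorem. -/
def IsLogConvexSeq (M : ℕ → ℝ) : Prop :=
  ∀ n, M (n + 1) ^ 2 ≤ M n * M (n + 2)

namespace IsLogConvexSeq

variable {M : ℕ → ℝ}

lemma monotone_succ_div (hlog : IsLogConvexSeq M) (hM : ∀ n, 0 < M n) :
    Monotone fun n ↦ M (n + 1) / M n := by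
  refine monotone_nat_of_le_succ fun n ↦ ?_
  rw [div_le_div_iff₀ (hM _) (hM _), ← sq, mul_comm]
  exact hlog n

lemma le_mul_pow (hlog : IsLogConvexSeq M) (hM : ∀ n, 0 < M n) {k n j : ℕ} (hj : n + j ≤ k + 1) :
    M (n + j) ≤ M n * (M (k + 1) / M k) ^ j := by
  induction j with
  | zero => simp
  | succ j ih =>
    have ratio_le : M (n + j + 1) / M (n + j) ≤ M (k + 1) / M k :=
      hlog.monotone_succ_div hM (by lia : n + j ≤ k)
    have := hM k
    have := hM (k + 1)
    calc M (n + (j + 1)) = M (n + j) * (M (n + j + 1) / M (n + j)) :=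
          (mul_div_cancel₀ _ (hM (n + j)).ne').symm
      _ ≤ M (n + j) * (M (k + 1) / M k) := mul_le_mul_of_nonneg_left ratio_le (hM _).le
      _ ≤ M n * (M (k + 1) / M k) ^ j * (M (k + 1) / M k) := by
          gcongr
          exact ih (by lia)
      _ = M n * (M (k + 1) / M k) ^ (j + 1) := by ring

lemma sum_taylor_le (hlog : IsLogConvexSeq M) (hM : ∀ n, 0 < M n) {k n m : ℕ} (hm : n + m = k + 1)
    {h : ℝ} (h0 : 0 ≤ h) (hh : h ≤ M k / M (k + 1) / exp 1) :
    ∑ j ∈ range (m + 1), h ^ j / j ! * (M (n + j) * exp ((n + j : ℕ) - (k + 1 : ℕ))) ≤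
      M n * exp (n - k) := by
  have := hM n
  have := hM k
  have := hM (k + 1)
  set y := exp 1 * h * (M (k + 1) / M k) with hy
  have y_le_one : y ≤ 1 := by
    calc exp 1 * h * (M (k + 1) / M k)
        ≤ exp 1 * (M k / M (k + 1) / exp 1) * (M (k + 1) / M k) := by gcongr
      _ = 1 := by field_simp
  have exp_split (j : ℕ) :
      exp ((n + j : ℕ) - (k + 1 : ℕ)) = exp (n - (k + 1 : ℕ)) * exp 1 ^ j := by
    rw [← exp_nat_mul, ← exp_add]
    push_cast
    ring_nf
  calc ∑ j ∈ range (m + 1), h ^ j / j ! * (M (n + j) * exp ((n + j : ℕ) - (k + 1 : ℕ)))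
      ≤ ∑ j ∈ range (m + 1), M n * exp (n - (k + 1 : ℕ)) * (y ^ j / j !) := by
        refine sum_le_sum fun j hj ↦ ?_
        have growth := hlog.le_mul_pow hM (by grind : n + j ≤ k + 1)
        calc h ^ j / j ! * (M (n + j) * exp ((n + j : ℕ) - (k + 1 : ℕ)))
            ≤ h ^ j / j ! * (M n * (M (k + 1) / M k) ^ j *
                (exp (n - (k + 1 : ℕ)) * exp 1 ^ j)) := by rw [exp_split]; gcongr
          _ = M n * exp (n - (k + 1 : ℕ)) * (y ^ j / j !) := by rw [hy]; ring
    _ ≤ M n * exp (n - (k + 1 : ℕ)) * exp 1 := by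
        rw [← mul_sum]
        gcongr
        exact (sum_le_exp_of_nonneg (by positivity) _).trans (exp_le_exp.2 y_le_one)
    _ = M n * exp (n - k) := by
        rw [mul_assoc, ← exp_add]
        push_cast
        ring_nf

end IsLogConvexSeq

/-- Flatness of order `k` of `f` at `t` relative to `M`. In terms of the functional of Bang's proof
of the Denjoy–Carleman theorem it says that `sup_n e⁻ⁿ ‖f⁽ⁿ⁾(t)‖ / M n ≤ e⁻ᵏ`. -/
def IsBangFlat {E : Type*} [NormedAddCommGroup E] [NormedSpace ℝ E] (f : ℝ → E) (M : ℕ → ℝ)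
    (k : ℕ) (t : ℝ) : Prop :=
  ∀ n : ℕ, ‖iteratedDeriv n f t‖ ≤ M n * exp (n - k)

section DenjoyCarleman

variable {E : Type*} [NormedAddCommGroup E] [NormedSpace ℝ E] [CompleteSpace E] {f : ℝ → E}
  {M : ℕ → ℝ}

lemma IsBangFlat.of_dist_le (hf : ContDiff ℝ ∞ f) (hM : ∀ n, 0 < M n) (hlog : IsLogConvexSeq M)
    (hbound : ∀ n t, ‖iteratedDeriv n f t‖ ≤ M n) {k : ℕ} {x t : ℝ}
    (hx : IsBangFlat f M (k + 1) x) (ht : dist x t ≤ M k / M (k + 1) / exp 1) :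
    IsBangFlat f M k t := by
  intro n
  rcases le_or_gt k n with hkn | hnk
  · have : 1 ≤ exp ((n : ℝ) - k) := one_le_exp (sub_nonneg.2 (mod_cast hkn))
    exact (hbound n t).trans (le_mul_of_one_le_right (hM n).le this)
  obtain ⟨m, hm⟩ : ∃ m, n + m = k + 1 := ⟨k + 1 - n, by lia⟩
  have taylor := norm_iteratedDeriv_add_le hf (hbound (n + m)) x (t - x)
  rw [add_sub_cancel] at taylor
  calc ‖iteratedDeriv n f t‖
      ≤ ∑ j ∈ range m, |t - x| ^ j / j ! * ‖iteratedDeriv (n + j) f x‖ +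
          |t - x| ^ m / m ! * M (n + m) := taylor
    _ ≤ ∑ j ∈ range m, |t - x| ^ j / j ! * (M (n + j) * exp ((n + j : ℕ) - (k + 1 : ℕ))) +
          |t - x| ^ m / m ! * (M (n + m) * exp ((n + m : ℕ) - (k + 1 : ℕ))) := by
        rw [hm, sub_self, exp_zero, mul_one]
        gcongr with j
        exact hx (n + j)
    _ ≤ M n * exp (n - k) := by
        rw [← sum_range_succ fun j : ℕ ↦
          |t - x| ^ j / j ! * (M (n + j) * exp ((n + j : ℕ) - (k + 1 : ℕ)))]
        exact hlog.sum_taylor_le hM hm (abs_nonneg _) (by rwa [← dist_eq, dist_comm])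

lemma isBangFlat_of_dist_le_sum (hf : ContDiff ℝ ∞ f) (hM : ∀ n, 0 < M n) (hlog : IsLogConvexSeq M)
    (hbound : ∀ n t, ‖iteratedDeriv n f t‖ ≤ M n) {x₀ : ℝ} (hflat : ∀ n, iteratedDeriv n f x₀ = 0)
    (d k : ℕ) {t : ℝ}
    (ht : dist x₀ t ≤ ∑ i ∈ range d, M (i + k) / M (i + k + 1) / exp 1) :
    IsBangFlat f M k t := by
  have step_nonneg (n : ℕ) : 0 ≤ M n / M (n + 1) / exp 1 := by
    have := hM n
    have := hM (n + 1)
    positivity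
  induction d generalizing k t with
  | zero =>
    obtain rfl : x₀ = t := dist_le_zero.1 (by simpa using ht)
    intro n
    rw [hflat, norm_zero]
    exact mul_nonneg (hM n).le (exp_nonneg _)
  | succ d ih =>
    rw [sum_range_succ', zero_add, add_comm] at ht
    obtain ⟨x, hx₀x, hxt⟩ := exists_dist_le_le
      (sum_nonneg fun i _ ↦ step_nonneg (i + 1 + k)) (step_nonneg k) ht
    refine IsBangFlat.of_dist_le hf hM hlog hbound (ih (k + 1) ?_) hxt
    simpa only [add_assoc, add_comm 1] using hx₀x

/-- The **Denjoy–Carleman theorem**, quasi-analyticity direction. -/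
theorem eq_zero_of_not_summable_div_succ (hf : ContDiff ℝ ∞ f) (hM : ∀ n, 0 < M n)
    (hlog : IsLogConvexSeq M) (hbound : ∀ n t, ‖iteratedDeriv n f t‖ ≤ M n) {x₀ : ℝ}
    (hflat : ∀ n, iteratedDeriv n f x₀ = 0) (hdiv : ¬ Summable fun n ↦ M n / M (n + 1)) :
    f = 0 := by
  funext t
  have flat (k : ℕ) : IsBangFlat f M k t := by
    have tail_div : ¬ Summable fun i ↦ M (i + k) / M (i + k + 1) / exp 1 := by
      rwa [summable_div_const_iff (exp_ne_zero 1),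
        summable_nat_add_iff (f := fun n ↦ M n / M (n + 1)) k]
    have tail_tendsto := (not_summable_iff_tendsto_nat_atTop_of_nonneg fun i ↦
      (div_pos (div_pos (hM _) (hM _)) (exp_pos 1)).le).1 tail_div
    obtain ⟨d, hd⟩ := (tail_tendsto.eventually_ge_atTop (dist x₀ t)).exists
    exact isBangFlat_of_dist_le_sum hf hM hlog hbound hflat d k hd
  have norm_le (k : ℕ) : ‖f t‖ ≤ M 0 * exp (-k) := by simpa using flat k 0
  have bound_tendsto : Tendsto (fun k : ℕ ↦ M 0 * exp (-k)) atTop (𝓝 0) := by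
    simpa using (tendsto_exp_neg_atTop_nhds_zero.comp tendsto_natCast_atTop_atTop).const_mul (M 0)
  exact norm_le_zero_iff.1 (ge_of_tendsto' bound_tendsto norm_le)

end DenjoyCarleman

section CarlemanInequality

lemma add_one_pow_le_exp_mul_factorial (n : ℕ) : ((n : ℝ) + 1) ^ n ≤ exp n * n ! := by
  induction n with
  | zero => simp
  | succ n ih =>
    have euler : (1 + ((n : ℝ) + 1)⁻¹) ^ (n + 1) ≤ exp 1 := by
      calc (1 + ((n : ℝ) + 1)⁻¹) ^ (n + 1) ≤ exp ((n : ℝ) + 1)⁻¹ ^ (n + 1) := by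
            gcongr
            linarith [add_one_le_exp ((n : ℝ) + 1)⁻¹]
        _ = exp 1 := by
            rw [← exp_nat_mul]
            push_cast
            rw [mul_inv_cancel₀ (by positivity)]
    calc (((n + 1 : ℕ) : ℝ) + 1) ^ (n + 1)
        = (n + 1) * ((n : ℝ) + 1) ^ n * (1 + ((n : ℝ) + 1)⁻¹) ^ (n + 1) := by
          rw [← pow_succ', ← mul_pow]
          push_cast
          field_simp
      _ ≤ (n + 1) * (exp n * n !) * exp 1 := by gcongr
      _ = exp (n + 1 : ℕ) * (n + 1)! := by
          rw [Nat.factorial_succ, Nat.cast_succ n, exp_add]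
          push_cast
          ring

lemma add_one_le_exp_one_mul_factorial_rpow {n : ℕ} (hn : n ≠ 0) :
    (n : ℝ) + 1 ≤ exp 1 * (n ! : ℝ) ^ (n : ℝ)⁻¹ := by
  calc (n : ℝ) + 1 = (((n : ℝ) + 1) ^ n) ^ (n : ℝ)⁻¹ :=
        (pow_rpow_inv_natCast (by positivity) hn).symm
    _ ≤ (exp 1 ^ n * n !) ^ (n : ℝ)⁻¹ := by
        gcongr
        simpa [← exp_nat_mul] using add_one_pow_le_exp_mul_factorial n
    _ = exp 1 * (n ! : ℝ) ^ (n : ℝ)⁻¹ := by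
        rw [mul_rpow (by positivity) (by positivity), pow_rpow_inv_natCast (exp_nonneg 1) hn]

variable {a : ℕ → ℝ}

-- The weights `j + 1` make AM-GM nearly sharp for the extremal behaviour `a j ∼ 1 / j`.
lemma geom_mean_le_weighted_sum (ha : ∀ j, 0 ≤ a j) (n : ℕ) :
    (∏ j ∈ range (n + 1), a j) ^ ((n : ℝ) + 1)⁻¹ ≤
      exp 1 * ((∑ j ∈ range (n + 1), ((j : ℝ) + 1) * a j) / ((n + 1) * (n + 2))) := by
  set g := (∏ j ∈ range (n + 1), a j) ^ ((n : ℝ) + 1)⁻¹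
  set T := ∑ j ∈ range (n + 1), ((j : ℝ) + 1) * a j
  have prod_nonneg : 0 ≤ ∏ j ∈ range (n + 1), a j := Finset.prod_nonneg fun j _ ↦ ha j
  have factorial_eq : ∏ j ∈ range (n + 1), ((j : ℝ) + 1) = (n + 1)! :=
    mod_cast prod_range_add_one_eq_factorial (n + 1)
  have total_weight_pos : 0 < ∑ _j ∈ range (n + 1), (1 : ℝ) := by
    rw [sum_const, card_range, nsmul_one]
    positivity
  have am_gm : ((n + 1)! : ℝ) ^ ((n : ℝ) + 1)⁻¹ * g ≤ T / (n + 1) := by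
    have := geom_mean_le_arith_mean (range (n + 1)) (fun _ ↦ 1) (fun j ↦ ((j : ℝ) + 1) * a j)
      (fun _ _ ↦ zero_le_one) total_weight_pos fun j _ ↦ mul_nonneg (by positivity) (ha j)
    simpa [prod_mul_distrib, factorial_eq, mul_rpow, prod_nonneg, T] using this
  have factorial_ge : (n : ℝ) + 2 ≤ exp 1 * ((n + 1)! : ℝ) ^ ((n : ℝ) + 1)⁻¹ := by
    have := add_one_le_exp_one_mul_factorial_rpow n.succ_ne_zero
    push_cast at this
    linarith
  have key : (n + 2) * g ≤ exp 1 * (T / (n + 1)) := by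
    calc (n + 2) * g ≤ exp 1 * ((n + 1)! : ℝ) ^ ((n : ℝ) + 1)⁻¹ * g :=
          mul_le_mul_of_nonneg_right factorial_ge (rpow_nonneg prod_nonneg _)
      _ ≤ exp 1 * (T / (n + 1)) := by
          rw [mul_assoc]
          gcongr
  calc g ≤ exp 1 * (T / (n + 1)) / (n + 2) := by rwa [le_div_iff₀' (by positivity)]
    _ = exp 1 * (T / ((n + 1) * (n + 2))) := by rw [mul_div_assoc, div_div]

lemma sum_weighted_sum_div_add (a : ℕ → ℝ) (N : ℕ) :
    ∑ n ∈ range N, (∑ j ∈ range (n + 1), ((j : ℝ) + 1) * a j) / ((n + 1) * (n + 2)) +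
      (∑ j ∈ range N, ((j : ℝ) + 1) * a j) / (N + 1) = ∑ j ∈ range N, a j := by
  induction N with
  | zero => simp
  | succ N ih =>
    rw [sum_range_succ, sum_range_succ a, ← ih, sum_range_succ _ N]
    push_cast
    field_simp
    ring

/-- **Carleman's inequality** for partial sums. -/
theorem sum_geom_mean_le (ha : ∀ j, 0 ≤ a j) (N : ℕ) :
    ∑ n ∈ range N, (∏ j ∈ range (n + 1), a j) ^ ((n : ℝ) + 1)⁻¹ ≤
      exp 1 * ∑ j ∈ range N, a j := by
  have remainder_nonneg : 0 ≤ (∑ j ∈ range N, ((j : ℝ) + 1) * a j) / (N + 1) :=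
    div_nonneg (sum_nonneg fun j _ ↦ mul_nonneg (by positivity) (ha j)) (by positivity)
  calc ∑ n ∈ range N, (∏ j ∈ range (n + 1), a j) ^ ((n : ℝ) + 1)⁻¹
      ≤ ∑ n ∈ range N,
          exp 1 * ((∑ j ∈ range (n + 1), ((j : ℝ) + 1) * a j) / ((n + 1) * (n + 2))) :=
        sum_le_sum fun n _ ↦ geom_mean_le_weighted_sum ha n
    _ ≤ exp 1 * ∑ j ∈ range N, a j := by
        rw [← mul_sum, ← sum_weighted_sum_div_add a N]
        gcongr
        linarith

lemma summable_geom_mean (ha : ∀ j, 0 ≤ a j) (hs : Summable a) :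
    Summable fun n : ℕ ↦ (∏ j ∈ range (n + 1), a j) ^ ((n : ℝ) + 1)⁻¹ :=
  summable_of_sum_range_le (fun _ ↦ rpow_nonneg (prod_nonneg fun j _ ↦ ha j) _) fun N ↦
    (sum_geom_mean_le ha N).trans <|
      mul_le_mul_of_nonneg_left (hs.sum_le_tsum _ fun j _ ↦ ha j) (exp_nonneg 1)

lemma min_one_le_rpow {x p : ℝ} (hx : 0 ≤ x) (hp₀ : 0 ≤ p) (hp₁ : p ≤ 1) : min 1 x ≤ x ^ p := by
  rcases le_total 1 x with h | h
  · exact (min_le_left 1 x).trans (one_le_rpow h hp₀)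
  · exact (min_le_right 1 x).trans (self_le_rpow_of_le_one hx h hp₁)

lemma summable_rpow_neg_inv_of_summable_div_succ {M : ℕ → ℝ} (hM : ∀ n, 0 < M n)
    (hs : Summable fun n ↦ M n / M (n + 1)) :
    Summable fun n : ℕ ↦ M (n + 1) ^ (-((n : ℝ) + 1)⁻¹) := by
  have telescope (n : ℕ) : ∏ j ∈ range n, M j / M (j + 1) = M 0 / M n :=
    prod_range_induction _ (fun n ↦ M 0 / M n) (div_self (hM 0).ne') n fun k _ ↦
      (div_mul_div_cancel₀ (hM k).ne').symm
  have geom := summable_geom_mean (fun n ↦ (div_pos (hM n) (hM (n + 1))).le) hs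
  simp only [telescope] at geom
  have min_pos : 0 < min 1 (M 0) := lt_min one_pos (hM 0)
  refine (geom.mul_left (min 1 (M 0))⁻¹).of_nonneg_of_le (fun n ↦ rpow_nonneg (hM _).le _)
    fun n ↦ ?_
  rw [div_rpow (hM 0).le (hM _).le, rpow_neg (hM _).le, le_inv_mul_iff₀ min_pos, div_eq_mul_inv]
  gcongr
  · exact (inv_nonneg.2 (rpow_nonneg (hM _).le _))
  · exact min_one_le_rpow (hM 0).le (by positivity) (inv_le_one_of_one_le₀ (by simp))

end CarlemanInequality

section AbsMoment

lemma sq_integral_pow_succ_le {α : Type*} [MeasurableSpace α] {μ : Measure α} {g : α → ℝ}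
    (hg : 0 ≤ g) {n : ℕ} (h₀ : Integrable (fun u ↦ g u ^ n) μ)
    (h₁ : Integrable (fun u ↦ g u ^ (n + 1)) μ) (h₂ : Integrable (fun u ↦ g u ^ (n + 2)) μ) :
    (∫ u, g u ^ (n + 1) ∂μ) ^ 2 ≤ (∫ u, g u ^ n ∂μ) * ∫ u, g u ^ (n + 2) ∂μ := by
  have quadratic_nonneg (x : ℝ) : 0 ≤ (∫ u, g u ^ n ∂μ) * (x * x) +
      (2 * ∫ u, g u ^ (n + 1) ∂μ) * x + ∫ u, g u ^ (n + 2) ∂μ := by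
    have h₀₁ : Integrable (fun u ↦ g u ^ n * (x * x) + g u ^ (n + 1) * (2 * x)) μ :=
      (h₀.mul_const _).add (h₁.mul_const _)
    calc 0 ≤ ∫ u, g u ^ n * (x + g u) ^ 2 ∂μ :=
          integral_nonneg fun u ↦ mul_nonneg (pow_nonneg (hg u) n) (sq_nonneg _)
      _ = ∫ u, (g u ^ n * (x * x) + g u ^ (n + 1) * (2 * x)) + g u ^ (n + 2) ∂μ := by
          congr with u
          ring
      _ = _ := by
          rw [integral_add h₀₁ h₂, integral_add (h₀.mul_const _) (h₁.mul_const _),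
            integral_mul_const, integral_mul_const]
          ring
  have := discrim_le_zero quadratic_nonneg
  rw [discrim] at this
  linarith

/-- The `n`-th absolute moment of a measure on the line; these moments are the weights `M n` to which
the Denjoy–Carleman theorem is applied. -/
noncomputable def absMoment (σ : Measure ℝ) (n : ℕ) : ℝ :=
  ∫ u, |u| ^ n ∂σ

variable {σ τ : Measure ℝ}

lemma norm_iteratedDeriv_charFun_le [IsFiniteMeasure σ] {n : ℕ} (hσ : MemLp id n σ) (t : ℝ) :
    ‖iteratedDeriv n (charFun σ) t‖ ≤ absMoment σ n := by
  rw [iteratedDeriv_charFun hσ, norm_mul, norm_pow, Complex.norm_I, one_pow, one_mul]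
  refine (norm_integral_le_integral_norm _).trans_eq (integral_congr_ae (.of_forall fun u ↦ ?_))
  simp [← Complex.ofReal_mul, Complex.norm_exp_ofReal_mul_I]

lemma absMoment_two_mul (σ : Measure ℝ) (k : ℕ) :
    absMoment σ (2 * k) = ∫ u, u ^ (2 * k) ∂σ := by
  simp only [absMoment, (even_two_mul k).pow_abs]

lemma absMoment_add {n : ℕ} (hσ : Integrable (fun u : ℝ ↦ |u| ^ n) σ)
    (hτ : Integrable (fun u : ℝ ↦ |u| ^ n) τ) :
    absMoment (σ + τ) n = absMoment σ n + absMoment τ n :=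
  integral_add_measure hσ hτ

lemma absMoment_pos {m n : ℕ} (hm : m ≠ 0) (hσm : absMoment σ m ≠ 0)
    (hσn : Integrable (fun u : ℝ ↦ |u| ^ n) σ) : 0 < absMoment σ n := by
  refine (integral_nonneg fun u ↦ by positivity).lt_of_ne' fun h ↦ hσm ?_
  rw [integral_eq_zero_iff_of_nonneg (fun u ↦ by positivity) hσn] at h
  refine integral_eq_zero_of_ae (h.mono fun u hu ↦ ?_)
  have abs_eq_zero : |u| = 0 := eq_zero_of_pow_eq_zero hu
  simp only [abs_eq_zero, zero_pow hm, Pi.zero_apply]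

lemma isLogConvexSeq_absMoment (hσ : ∀ k : ℕ, Integrable (fun u : ℝ ↦ |u| ^ k) σ) :
    IsLogConvexSeq (absMoment σ) := fun n ↦
  sq_integral_pow_succ_le (fun u ↦ abs_nonneg u) (hσ n) (hσ (n + 1)) (hσ (n + 2))

lemma isFiniteMeasure_of_integrable_abs_pow_zero (hσ : Integrable (fun u : ℝ ↦ |u| ^ 0) σ) :
    IsFiniteMeasure σ := by
  simpa [integrable_const_iff] using hσ

lemma memLp_id_of_integrable_abs_pow {n : ℕ} (hσ : Integrable (fun u : ℝ ↦ |u| ^ n) σ) :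
    MemLp id n σ := by
  rcases eq_or_ne n 0 with rfl | hn
  · exact_mod_cast memLp_zero_iff_aestronglyMeasurable.2 aestronglyMeasurable_id
  · rw [← integrable_norm_rpow_iff aestronglyMeasurable_id (mod_cast hn) (ENNReal.natCast_ne_top n)]
    simpa using hσ

theorem measure_eq_of_not_summable_absMoment_div_succ
    (hσ : ∀ k : ℕ, Integrable (fun u : ℝ ↦ |u| ^ k) σ)
    (hτ : ∀ k : ℕ, Integrable (fun u : ℝ ↦ |u| ^ k) τ)
    (hmoment : ∀ k : ℕ, ∫ u, u ^ k ∂σ = ∫ u, u ^ k ∂τ)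
    (hdiv : ¬ Summable fun n ↦ absMoment (σ + τ) n / absMoment (σ + τ) (n + 1)) : σ = τ := by
  have := isFiniteMeasure_of_integrable_abs_pow_zero (hσ 0)
  have := isFiniteMeasure_of_integrable_abs_pow_zero (hτ 0)
  have memLp_σ (n : ℕ) : MemLp id n σ := memLp_id_of_integrable_abs_pow (hσ n)
  have memLp_τ (n : ℕ) : MemLp id n τ := memLp_id_of_integrable_abs_pow (hτ n)
  have moment_pos (n : ℕ) : 0 < absMoment (σ + τ) n := by
    obtain ⟨m, hm⟩ : ∃ m, absMoment (σ + τ) (m + 1) ≠ 0 := by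
      by_contra! h
      exact hdiv (by simp [h, summable_zero])
    exact absMoment_pos m.succ_ne_zero hm ((hσ n).add_measure (hτ n))
  have smooth_σ (n : ℕ) : ContDiff ℝ n (charFun σ) := contDiff_charFun (memLp_σ n)
  have smooth_τ (n : ℕ) : ContDiff ℝ n (charFun τ) := contDiff_charFun (memLp_τ n)
  have iteratedDeriv_diff (n : ℕ) (t : ℝ) : iteratedDeriv n (charFun σ - charFun τ) t =
      iteratedDeriv n (charFun σ) t - iteratedDeriv n (charFun τ) t :=
    iteratedDeriv_sub (smooth_σ n).contDiffAt (smooth_τ n).contDiffAt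
  have diff_eq_zero : charFun σ - charFun τ = 0 := by
    refine eq_zero_of_not_summable_div_succ (x₀ := 0)
      (contDiff_infty.2 fun n ↦ (smooth_σ n).sub (smooth_τ n)) moment_pos
      (isLogConvexSeq_absMoment fun k ↦ (hσ k).add_measure (hτ k)) (fun n t ↦ ?_) (fun n ↦ ?_) hdiv
    · rw [iteratedDeriv_diff, absMoment_add (hσ n) (hτ n)]
      exact (norm_sub_le _ _).trans (add_le_add (norm_iteratedDeriv_charFun_le (memLp_σ n) t)
        (norm_iteratedDeriv_charFun_le (memLp_τ n) t))
    · rw [iteratedDeriv_diff, iteratedDeriv_charFun_zero (memLp_σ n),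
        iteratedDeriv_charFun_zero (memLp_τ n), hmoment, sub_self]
  exact Measure.ext_of_charFun (sub_eq_zero.1 diff_eq_zero)

end AbsMoment

theorem carleman_determinate_general {s : ℕ → ℝ}
    (hdiv : ¬ Summable fun n : ℕ ↦ s (2 * (n + 1)) ^ (-(1 : ℝ) / (2 * ((n : ℝ) + 1))))
    {σ₁ σ₂ : Measure ℝ} (hσ₁ : ∀ k : ℕ, Integrable (fun u : ℝ ↦ |u| ^ k) σ₁)
    (hσ₂ : ∀ k : ℕ, Integrable (fun u : ℝ ↦ |u| ^ k) σ₂) (hs₁ : ∀ k : ℕ, ∫ u, u ^ k ∂σ₁ = s k)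
    (hs₂ : ∀ k : ℕ, ∫ u, u ^ k ∂σ₂ = s k) : σ₁ = σ₂ := by
  have even_moment (k : ℕ) : absMoment (σ₁ + σ₂) (2 * k) / 2 = s (2 * k) := by
    rw [absMoment_add (hσ₁ _) (hσ₂ _), absMoment_two_mul, absMoment_two_mul, hs₁, hs₂]
    ring
  obtain ⟨m, hm⟩ : ∃ m, s (2 * (m + 1)) ≠ 0 := by
    by_contra! h
    refine hdiv (summable_zero.congr fun n ↦ ?_)
    rw [h, zero_rpow (div_ne_zero (by norm_num) (by positivity))]
  have moment_pos (n : ℕ) : 0 < absMoment (σ₁ + σ₂) n := by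
    refine absMoment_pos (by lia : 2 * (m + 1) ≠ 0) (fun h ↦ hm ?_) ((hσ₁ n).add_measure (hσ₂ n))
    rw [← even_moment, h, zero_div]
  refine measure_eq_of_not_summable_absMoment_div_succ hσ₁ hσ₂
    (fun k ↦ (hs₁ k).trans (hs₂ k).symm) fun hratio ↦ hdiv ?_
  have root_summable := summable_rpow_neg_inv_of_summable_div_succ (fun n ↦ half_pos (moment_pos n))
    (by simpa only [div_div_div_cancel_right₀ (two_ne_zero' ℝ)] using hratio)
  refine (root_summable.comp_injective (i := fun n ↦ 2 * n + 1) fun _ _ _ ↦ by lia).congr fun n ↦ ?_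
  rw [Function.comp_apply, show 2 * n + 1 + 1 = 2 * (n + 1) by ring, even_moment]
  congr 1
  push_cast
  field_simp
  ring

/-- **Carleman's theorem.** If `s` is a strictly positive real sequence such that
`∑_{n ≥ 1} s_{2n} ^ (-1/(2n)) = ∞`, then the Hamburger moment problem for `s` is
determinate: any two measures on `ℝ` having all moments finite and equal to `s` coincide. -/
theorem carleman_determinate (s : ℕ → ℝ) (hpos : IsStrictPosSeq s)
    (hdiv : ¬ Summable fun n : ℕ =>
      (s (2 * (n + 1))) ^ (-(1 : ℝ) / (2 * ((n : ℝ) + 1)))) :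
    ∀ σ₁ σ₂ : Measure ℝ,
      (∀ k : ℕ, Integrable (fun u : ℝ => |u| ^ k) σ₁) →
      (∀ k : ℕ, Integrable (fun u : ℝ => |u| ^ k) σ₂) →
      (∀ k : ℕ, ∫ u, u ^ k ∂σ₁ = s k) →
      (∀ k : ℕ, ∫ u, u ^ k ∂σ₂ = s k) →
      σ₁ = σ₂ :=
  fun _ _ ↦ carleman_determinate_general hdiv
end

section
/- If σ is a measure on ℝ with all moments finite (∫_ℝ |u|^k dσ(u) < ∞ for all k ≥ 0) and σ is the solution of a determinate moment problem (i.e., any measure on ℝ with the same moments as σ equals σ), then the set of (real) polynomial functions is dense in L²(σ). -/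
open MeasureTheory

/-!
Determinacy means that integration against `σ` is the only positive functional, on the continuous
functions of polynomial growth, with the given values on polynomials: any other one would be
integration against a measure with the same moments. By Hahn–Banach, a functional with this
uniqueness property admits one-sided approximation: each `f` of polynomial growth has polynomial
majorants `p` with `∫ (p - f) dσ` arbitrarily small (M. Riesz).

Take `f(x) = -1 / |x - z|²` with `z` nonreal. Then `s = 1 + |x - z|² p` is nonnegative on `ℝ`, so
`s = |r|²` with `r` a complex polynomial (Fejér–Riesz), where `|r(z)| ≥ 1` may be assumed because
`s(z) = 1`. Dividing `1 - r / r(z)` by `x - z` gives a polynomial `Q` with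
`|1 / (x - z) - Q|² ≤ p - f`. Hence `1 / (x - z)` is in the `L²`-closure of the polynomials, and the
orthogonal complement of the polynomials is stable under multiplication by `1 / (x - z)`. For `g` in
the complement, the signed measure `g dσ` thus annihilates a point-separating star algebra of
bounded continuous functions, so `g = 0`.
-/

section
open Filter Polynomial Topology
open scoped BoundedContinuousFunction CompactlySupported ComplexConjugate

section HahnBanach

variable {E : Type*} [AddCommGroup E] [Module ℝ E]

theorem exists_linearMap_le_sublinear_eq (N : E → ℝ)
    (N_smul : ∀ c : ℝ, 0 < c → ∀ x, N (c • x) = c * N x)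
    (N_add : ∀ x y, N (x + y) ≤ N x + N y) (x : E) :
    ∃ L : E →ₗ[ℝ] ℝ, L x = N x ∧ ∀ y, L y ≤ N y := by
  have N_zero : N 0 = 0 := by linarith [N_smul 2 two_pos 0, congrArg N (smul_zero (2 : ℝ) (A := E))]
  have hx : ∀ c : ℝ, c • x = 0 → c • N x = 0 := by
    intro c hc
    rcases smul_eq_zero.1 hc with rfl | rfl <;> simp [N_zero]
  let F : E →ₗ.[ℝ] ℝ := LinearPMap.mkSpanSingleton' x (N x) hx
  have hF : ∀ y : F.domain, F y ≤ N y := by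
    rintro ⟨y, hy⟩
    obtain ⟨c, rfl⟩ := Submodule.mem_span_singleton.1 hy
    rw [LinearPMap.mkSpanSingleton'_apply]
    change c * N x ≤ N (c • x)
    rcases lt_trichotomy c 0 with hc | rfl | hc
    · have := N_add (c • x) (-c • x)
      rw [← add_smul, add_neg_cancel, zero_smul, N_zero, N_smul (-c) (neg_pos.2 hc)] at this
      linarith
    · simp [N_zero]
    · exact (N_smul c hc x).ge
  obtain ⟨L, hLF, hLN⟩ := exists_extension_of_le_sublinear F N N_smul N_add hF
  refine ⟨L, ?_, hLN⟩
  have hxF : x ∈ F.domain := Submodule.mem_span_singleton_self x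
  exact (hLF ⟨x, hxF⟩).trans (LinearPMap.mkSpanSingleton'_apply_self x (N x) hx hxF)

end HahnBanach

section UpperEnvelope

variable {E : Type*} [AddCommGroup E] [PartialOrder E] [Module ℝ E]

/-- The values of a functional `Λ` at the majorants of `x` in a subspace `W`. -/
def majorantValues (W : Submodule ℝ E) (Λ : E →ₚ[ℝ] ℝ) (x : E) : Set ℝ :=
  Λ '' {w | w ∈ W ∧ x ≤ w}

/-- The upper envelope of `Λ` with respect to `W`: the largest value at `x` of a positive functional
that agrees with `Λ` on `W`. It has its meaning only if `x` has a majorant in `W`. -/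
noncomputable def upperEnvelope (W : Submodule ℝ E) (Λ : E →ₚ[ℝ] ℝ) (x : E) : ℝ :=
  sInf (majorantValues W Λ x)

variable {W : Submodule ℝ E} {Λ : E →ₚ[ℝ] ℝ}

theorem mem_lowerBounds_majorantValues (x : E) : Λ x ∈ lowerBounds (majorantValues W Λ x) := by
  rintro _ ⟨w, ⟨-, hxw⟩, rfl⟩
  exact OrderHomClass.mono Λ hxw

theorem bddBelow_majorantValues (x : E) : BddBelow (majorantValues W Λ x) :=
  ⟨_, mem_lowerBounds_majorantValues x⟩

theorem upperEnvelope_le {x w : E} (hw : w ∈ W) (hxw : x ≤ w) : upperEnvelope W Λ x ≤ Λ w :=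
  csInf_le (bddBelow_majorantValues x) ⟨w, ⟨hw, hxw⟩, rfl⟩

theorem majorantValues_nonempty (hW : ∀ x, ∃ w ∈ W, x ≤ w) (x : E) :
    (majorantValues W Λ x).Nonempty := by
  obtain ⟨w, hw, hxw⟩ := hW x
  exact ⟨_, w, ⟨hw, hxw⟩, rfl⟩

theorem upperEnvelope_add_le [IsOrderedAddMonoid E] (hW : ∀ x, ∃ w ∈ W, x ≤ w) (x y : E) :
    upperEnvelope W Λ (x + y) ≤ upperEnvelope W Λ x + upperEnvelope W Λ y := by
  have hx := majorantValues_nonempty (Λ := Λ) hW x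
  have hy := majorantValues_nonempty (Λ := Λ) hW y
  unfold upperEnvelope
  rw [← csInf_add hx (bddBelow_majorantValues x) hy (bddBelow_majorantValues y)]
  refine csInf_le_csInf (bddBelow_majorantValues _) (hx.add hy) ?_
  rintro _ ⟨_, ⟨v, ⟨hv, hxv⟩, rfl⟩, _, ⟨w, ⟨hw, hyw⟩, rfl⟩, rfl⟩
  exact ⟨v + w, ⟨W.add_mem hv hw, add_le_add hxv hyw⟩, map_add Λ v w⟩

open scoped Pointwise in
theorem upperEnvelope_smul [PosSMulMono ℝ E] {c : ℝ} (hc : 0 < c) (x : E) :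
    upperEnvelope W Λ (c • x) = c * upperEnvelope W Λ x := by
  have hset : majorantValues W Λ (c • x) = c • majorantValues W Λ x := by
    ext t
    constructor
    · rintro ⟨w, ⟨hw, hxw⟩, rfl⟩
      refine ⟨_, ⟨c⁻¹ • w, ⟨W.smul_mem _ hw, ?_⟩, rfl⟩, ?_⟩
      · exact (le_inv_smul_iff_of_pos hc).2 hxw
      · simp [hc.ne']
    · rintro ⟨_, ⟨w, ⟨hw, hxw⟩, rfl⟩, rfl⟩
      exact ⟨c • w, ⟨W.smul_mem c hw, smul_le_smul_of_nonneg_left hxw hc.le⟩, map_smul Λ c w⟩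
  rw [upperEnvelope, hset, Real.sInf_smul_of_nonneg hc.le, smul_eq_mul, upperEnvelope]

variable [IsOrderedAddMonoid E] [PosSMulMono ℝ E]

theorem exists_positiveLinearMap_eqOn_apply_eq_upperEnvelope (hW : ∀ x, ∃ w ∈ W, x ≤ w) (x : E) :
    ∃ L : E →ₚ[ℝ] ℝ, Set.EqOn L Λ W ∧ L x = upperEnvelope W Λ x := by
  obtain ⟨L, hLx, hLN⟩ := exists_linearMap_le_sublinear_eq (upperEnvelope W Λ)
    (fun _ hc => upperEnvelope_smul hc) (upperEnvelope_add_le hW) x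
  have hle {y w : E} (hw : w ∈ W) (hyw : y ≤ w) : L y ≤ Λ w :=
    (hLN y).trans (upperEnvelope_le hw hyw)
  refine ⟨.mk₀ L fun y hy => ?_, fun w hw => le_antisymm (hle hw le_rfl) ?_, hLx⟩
  · simpa using hle W.zero_mem (neg_nonpos.2 hy)
  · change Λ w ≤ L w
    simpa using hle (W.neg_mem hw) le_rfl

theorem exists_majorant_lt_add_of_unique (hW : ∀ x, ∃ w ∈ W, x ≤ w)
    (hΛ : ∀ L : E →ₚ[ℝ] ℝ, Set.EqOn L Λ W → L = Λ) (x : E) {ε : ℝ} (hε : 0 < ε) :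
    ∃ w ∈ W, x ≤ w ∧ Λ w < Λ x + ε := by
  obtain ⟨L, hLW, hLx⟩ := exists_positiveLinearMap_eqOn_apply_eq_upperEnvelope (Λ := Λ) hW x
  obtain ⟨_, ⟨w, ⟨hw, hxw⟩, rfl⟩, hlt⟩ :=
    Real.lt_sInf_add_pos (majorantValues_nonempty (Λ := Λ) hW x) hε
  refine ⟨w, hw, hxw, ?_⟩
  rw [hΛ L hLW] at hLx
  rwa [hLx]

end UpperEnvelope

section Adapted

variable {X : Type*} [TopologicalSpace X]

instance posSMulMono_submodule_continuousMap (E : Submodule ℝ C(X, ℝ)) : PosSMulMono ℝ E where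
  smul_le_smul_of_nonneg_left _ hc _ _ hfg := smul_le_smul_of_nonneg_left (β := C(X, ℝ)) hfg hc

theorem abs_map_le_of_abs_apply_le {E : Submodule ℝ C(X, ℝ)} (L : E →ₚ[ℝ] ℝ) {f q : E}
    (h : ∀ x, |f.1 x| ≤ q.1 x) : |L f| ≤ L q := by
  refine abs_le'.2 ⟨OrderHomClass.mono L fun x => (le_abs_self _).trans (h x), ?_⟩
  rw [← map_neg]
  exact OrderHomClass.mono L fun x => (neg_le_abs _).trans (h x)

theorem tendsto_of_abs_sub_le_one_div_mul {u : ℕ → ℝ} {a b : ℝ}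
    (h : ∀ n : ℕ, |u n - a| ≤ 1 / ((n : ℝ) + 1) * b) : Tendsto u atTop (𝓝 a) := by
  rw [tendsto_iff_dist_tendsto_zero]
  refine squeeze_zero (fun _ => dist_nonneg) h ?_
  simpa using tendsto_one_div_add_atTop_nhds_zero_nat.mul_const b

theorem exists_compactlySupported_abs_sub_le [R1Space X] [LocallyCompactSpace X] {f q : C(X, ℝ)}
    (hfq : f =o[cocompact X] q) (hq : 0 ≤ q) {ε : ℝ} (hε : 0 < ε) :
    ∃ t : C_c(X, ℝ), (∀ x, |t x| ≤ |f x|) ∧ ∀ x, |t x - f x| ≤ ε * q x := by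
  obtain ⟨K, hK, hKf⟩ := mem_cocompact.1 (hfq.bound hε)
  obtain ⟨φ, hφK, -, hφc, hφ⟩ :=
    exists_continuous_one_zero_of_isCompact hK isClosed_empty (Set.disjoint_empty K)
  refine ⟨⟨f * φ, hφc.mul_left⟩, fun x => ?_, fun x => ?_⟩
  · change |f x * φ x| ≤ |f x|
    rw [abs_mul, abs_of_nonneg (hφ x).1]
    exact mul_le_of_le_one_right (abs_nonneg _) (hφ x).2
  change |f x * φ x - f x| ≤ ε * q x
  by_cases hx : x ∈ K
  · simpa [hφK hx] using mul_nonneg hε.le (hq x)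
  calc |f x * φ x - f x| = |f x| * (1 - φ x) := by
        rw [← mul_sub_one, abs_mul, abs_sub_comm, abs_of_nonneg (sub_nonneg.2 (hφ x).2)]
    _ ≤ |f x| := mul_le_of_le_one_right (abs_nonneg _) (by linarith [(hφ x).1])
    _ ≤ ε * q x := by
        simpa [abs_of_nonneg (show 0 ≤ q x from hq x)] using hKf hx

/-- Choquet's adapted spaces: spaces of continuous functions that contain all compactly supported
ones and in which every function is negligible at infinity against a member of the space. They are
the spaces on which every positive functional is integration against a measure. -/
structure IsAdapted (E : Submodule ℝ C(X, ℝ)) : Prop where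
  mem_of_hasCompactSupport : ∀ f : C(X, ℝ), HasCompactSupport f → f ∈ E
  exists_dominating : ∀ f ∈ E, ∃ q ∈ E, (∀ x, |f x| ≤ q x) ∧ f =o[cocompact X] q

namespace IsAdapted

variable {E : Submodule ℝ C(X, ℝ)}

/-- The inclusion of `C_c(X, ℝ)` into an adapted space, as a positive map: it restricts a positive
functional to the domain of the Riesz–Markov–Kakutani theorem. -/
def ofCompactlySupported (hE : IsAdapted E) : C_c(X, ℝ) →ₚ[ℝ] E where
  toFun f := ⟨f.toContinuousMap, hE.mem_of_hasCompactSupport _ f.hasCompactSupport⟩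
  map_add' _ _ := rfl
  map_smul' _ _ := rfl
  monotone' _ _ hfg := hfg

theorem exists_seq_truncation [R1Space X] [LocallyCompactSpace X] (hE : IsAdapted E)
    {f : C(X, ℝ)} (hf : f ∈ E) :
    ∃ q ∈ E, (∀ x, |f x| ≤ q x) ∧ ∃ t : ℕ → C_c(X, ℝ), (∀ n x, |t n x| ≤ |f x|) ∧
      ∀ n x, |t n x - f x| ≤ 1 / ((n : ℝ) + 1) * q x := by
  obtain ⟨q, hqE, hfq, hfo⟩ := hE.exists_dominating f hf
  have hq : 0 ≤ q := fun x => (abs_nonneg _).trans (hfq x)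
  choose t ht using fun n : ℕ =>
    exists_compactlySupported_abs_sub_le hfo hq (Nat.one_div_pos_of_nat (α := ℝ) (n := n))
  exact ⟨q, hqE, hfq, t, fun n => (ht n).1, fun n => (ht n).2⟩

end IsAdapted

variable [T2Space X] [LocallyCompactSpace X] [MeasurableSpace X] [BorelSpace X]

namespace IsAdapted

variable {E : Submodule ℝ C(X, ℝ)} {L : E →ₚ[ℝ] ℝ} {μ : Measure X} [IsFiniteMeasureOnCompacts μ]

theorem integrable_of_integral_compactlySupported_eq (hE : IsAdapted E)
    (hμ : ∀ t : C_c(X, ℝ), ∫ x, t x ∂μ = L (hE.ofCompactlySupported t)) (f : E) :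
    Integrable f.1 μ := by
  obtain ⟨q, hqE, hfq, t, htf, htq⟩ := hE.exists_seq_truncation f.2
  have hint (t : C_c(X, ℝ)) : Integrable t μ :=
    t.continuous.integrable_of_hasCompactSupport t.hasCompactSupport
  have hbound (n : ℕ) : eLpNorm (t n) 1 μ ≤ ENNReal.ofReal (L ⟨q, hqE⟩) := by
    let a : C_c(X, ℝ) := ⟨|(t n).toContinuousMap|, (t n).hasCompactSupport.abs⟩
    rw [eLpNorm_one_eq_lintegral_enorm, ← ofReal_integral_norm_eq_lintegral_enorm (hint _)]
    refine ENNReal.ofReal_le_ofReal ?_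
    calc ∫ x, ‖t n x‖ ∂μ = L (hE.ofCompactlySupported a) := hμ a
      _ ≤ L ⟨q, hqE⟩ := OrderHomClass.mono L fun x => (htf n x).trans (hfq x)
  have hmeas (n : ℕ) : AEStronglyMeasurable (t n) μ := (hint _).aestronglyMeasurable
  have hlim (x : X) : Tendsto (fun n => t n x) atTop (𝓝 (f.1 x)) :=
    tendsto_of_abs_sub_le_one_div_mul fun n => htq n x
  -- `X` need not be second countable, so the continuity of `f` alone does not give measurability.
  refine memLp_one_iff_integrable.1 ⟨aestronglyMeasurable_of_tendsto_ae atTop hmeas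
    (.of_forall hlim), ?_⟩
  exact (Lp.eLpNorm_le_of_ae_tendsto (.of_forall hbound) hmeas (.of_forall hlim)).trans_lt
    ENNReal.ofReal_lt_top

theorem integral_eq_of_integral_compactlySupported_eq (hE : IsAdapted E)
    (hμ : ∀ t : C_c(X, ℝ), ∫ x, t x ∂μ = L (hE.ofCompactlySupported t)) (f : E) :
    ∫ x, f.1 x ∂μ = L f := by
  obtain ⟨q, hqE, -, t, htf, htq⟩ := hE.exists_seq_truncation f.2
  have hL : Tendsto (fun n => L (hE.ofCompactlySupported (t n))) atTop (𝓝 (L f)) :=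
    tendsto_of_abs_sub_le_one_div_mul (b := L ⟨q, hqE⟩) fun n => by
      rw [← map_sub, ← smul_eq_mul, ← map_smul]
      exact abs_map_le_of_abs_apply_le L (htq n)
  refine tendsto_nhds_unique ?_ (hL.congr fun n => (hμ (t n)).symm)
  refine tendsto_integral_of_dominated_convergence (fun x => |f.1 x|) (fun n => ?_)
    (hE.integrable_of_integral_compactlySupported_eq hμ f).abs (fun n => .of_forall (htf n))
    (.of_forall fun x => tendsto_of_abs_sub_le_one_div_mul fun n => htq n x)
  exact ((t n).continuous.integrable_of_hasCompactSupport
    (t n).hasCompactSupport).aestronglyMeasurable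

theorem exists_measure_integral_eq (hE : IsAdapted E) (L : E →ₚ[ℝ] ℝ) :
    ∃ μ : Measure X, ∀ f : E, Integrable f.1 μ ∧ ∫ x, f.1 x ∂μ = L f := by
  have hμ (t : C_c(X, ℝ)) : ∫ x, t x ∂(RealRMK.rieszMeasure (L.comp hE.ofCompactlySupported)) =
      L (hE.ofCompactlySupported t) :=
    RealRMK.integral_rieszMeasure _ t
  exact ⟨_, fun f => ⟨hE.integrable_of_integral_compactlySupported_eq hμ f,
    hE.integral_eq_of_integral_compactlySupported_eq hμ f⟩⟩

end IsAdapted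

end Adapted

section Moments

/-- All the moments of `σ` are finite. -/
def HasFiniteMoments (σ : Measure ℝ) : Prop :=
  ∀ k : ℕ, Integrable (fun u : ℝ => |u| ^ k) σ

/-- The moment problem solved by `σ` is determinate: `σ` is determined by its moments among all
measures on `ℝ` with finite moments. -/
def IsMomentDeterminate (σ : Measure ℝ) : Prop :=
  ∀ μ : Measure ℝ, HasFiniteMoments μ → (∀ k : ℕ, ∫ u, u ^ k ∂μ = ∫ u, u ^ k ∂σ) → μ = σ

/-- The space of continuous functions on `ℝ` of at most polynomial growth. -/
def polyGrowth : Submodule ℝ C(ℝ, ℝ) where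
  carrier := {f | ∃ p : ℝ[X], ∀ x, |f x| ≤ p.eval x}
  zero_mem' := ⟨0, by simp⟩
  add_mem' := by
    rintro f g ⟨p, hp⟩ ⟨q, hq⟩
    refine ⟨p + q, fun x => ?_⟩
    rw [eval_add]
    exact (abs_add_le _ _).trans (add_le_add (hp x) (hq x))
  smul_mem' := by
    rintro c f ⟨p, hp⟩
    refine ⟨C |c| * p, fun x => ?_⟩
    simpa [abs_mul] using mul_le_mul_of_nonneg_left (hp x) (abs_nonneg c)

theorem toContinuousMap_mem_polyGrowth (p : ℝ[X]) : p.toContinuousMap ∈ polyGrowth :=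
  ⟨1 + p ^ 2, fun x => by
    simpa using (show |p.eval x| ≤ 1 + p.eval x ^ 2 by
      nlinarith [sq_abs (p.eval x), sq_nonneg (|p.eval x| - 1)])⟩

theorem mem_polyGrowth_of_bounded {f : C(ℝ, ℝ)} {c : ℝ} (hf : ∀ x, |f x| ≤ c) :
    f ∈ polyGrowth :=
  ⟨C c, by simpa using hf⟩

theorem one_isLittleO_one_add_sq :
    (fun _ => 1 : ℝ → ℝ) =o[cocompact ℝ] fun x => 1 + x ^ 2 := by
  refine Asymptotics.isLittleO_const_left.2 (.inr ?_)
  refine tendsto_norm_atTop_atTop.comp (tendsto_atTop_add_const_left _ 1 ?_)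
  simpa only [Function.comp_def, Real.norm_eq_abs, sq_abs] using
    (tendsto_pow_atTop two_ne_zero).comp (tendsto_norm_cocompact_atTop (E := ℝ))

theorem isAdapted_polyGrowth : IsAdapted polyGrowth where
  mem_of_hasCompactSupport f hf := by
    obtain ⟨c, hc⟩ := hf.exists_bound_of_continuous f.continuous
    exact mem_polyGrowth_of_bounded hc
  exists_dominating := by
    rintro f ⟨p, hp⟩
    have hp₀ (x : ℝ) : 0 ≤ p.eval x := (abs_nonneg _).trans (hp x)
    have hq (x : ℝ) : (p * (1 + X ^ 2)).toContinuousMap x = p.eval x * (1 + x ^ 2) := by simp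
    refine ⟨_, toContinuousMap_mem_polyGrowth (p * (1 + X ^ 2)), fun x => ?_, ?_⟩
    · rw [hq]
      exact (hp x).trans (le_mul_of_one_le_right (hp₀ x) (by nlinarith [sq_nonneg x]))
    · have hfp : f =O[cocompact ℝ] fun x => p.eval x :=
        .of_bound' (.of_forall fun x => (hp x).trans (le_abs_self _))
      simpa [funext hq] using hfp.mul_isLittleO one_isLittleO_one_add_sq

/-- The polynomials as a subspace of the functions of polynomial growth. -/
noncomputable def polynomialSubmodule : Submodule ℝ polyGrowth :=
  (LinearMap.range (toContinuousMapAlgHom (R := ℝ)).toLinearMap).comap polyGrowth.subtype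

theorem exists_mem_polynomialSubmodule_ge (f : polyGrowth) : ∃ w ∈ polynomialSubmodule, f ≤ w := by
  obtain ⟨p, hp⟩ := f.2
  exact ⟨⟨_, toContinuousMap_mem_polyGrowth p⟩, ⟨p, rfl⟩,
    fun x => (le_abs_self _).trans (hp x)⟩

namespace HasFiniteMoments

variable {σ : Measure ℝ}

theorem memLp_eval {𝕜 : Type*} [RCLike 𝕜] (hσ : HasFiniteMoments σ) (Q : 𝕜[X]) :
    MemLp (fun x : ℝ => Q.eval (x : 𝕜)) 2 σ := by
  induction Q using Polynomial.induction_on' with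
  | add P Q hP hQ =>
    simp only [eval_add]
    exact hP.add hQ
  | monomial k c =>
    have hk : MemLp (fun x : ℝ => (x : 𝕜) ^ k) 2 σ := by
      refine (memLp_two_iff_integrable_sq_norm ?_).2 ?_
      · exact (RCLike.continuous_ofReal.pow k).aestronglyMeasurable
      · simpa [← pow_mul, Real.norm_eq_abs] using hσ (k * 2)
    simpa using hk.const_mul c

theorem isFiniteMeasure (hσ : HasFiniteMoments σ) : IsFiniteMeasure σ := by
  simpa [integrable_const_iff] using hσ 0

theorem integrable_of_memLp_two {E : Type*} [NormedAddCommGroup E] (hσ : HasFiniteMoments σ)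
    {f : ℝ → E} (hf : MemLp f 2 σ) : Integrable f σ :=
  have := hσ.isFiniteMeasure
  hf.integrable one_le_two

theorem integrable_eval (hσ : HasFiniteMoments σ) (p : ℝ[X]) :
    Integrable (fun x => p.eval x) σ :=
  hσ.integrable_of_memLp_two (hσ.memLp_eval p)

theorem integrable_polyGrowth (hσ : HasFiniteMoments σ) (f : polyGrowth) : Integrable f.1 σ := by
  obtain ⟨p, hp⟩ := f.2
  exact (hσ.integrable_eval p).mono' f.1.continuous.aestronglyMeasurable (.of_forall hp)

/-- Integration as a positive functional on the functions of polynomial growth. -/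
noncomputable def integralFunctional (hσ : HasFiniteMoments σ) : polyGrowth →ₚ[ℝ] ℝ where
  toFun f := ∫ x, f.1 x ∂σ
  map_add' f g := integral_add (hσ.integrable_polyGrowth f) (hσ.integrable_polyGrowth g)
  map_smul' c f := integral_const_mul c f.1
  monotone' f g hfg :=
    integral_mono (hσ.integrable_polyGrowth f) (hσ.integrable_polyGrowth g) hfg

theorem eq_integralFunctional_of_eqOn (hσ : HasFiniteMoments σ)
    (hdet : IsMomentDeterminate σ) {L : polyGrowth →ₚ[ℝ] ℝ}
    (hL : Set.EqOn L hσ.integralFunctional polynomialSubmodule) : L = hσ.integralFunctional := by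
  obtain ⟨μ, hμ⟩ := isAdapted_polyGrowth.exists_measure_integral_eq L
  suffices μ = σ by
    ext f
    rw [← (hμ f).2, this]
    rfl
  refine hdet μ (fun k => ?_) fun k => ?_
  · simpa using (hμ ⟨_, toContinuousMap_mem_polyGrowth (X ^ k)⟩).1.abs
  · have hk : ∫ x, (X ^ k : ℝ[X]).toContinuousMap x ∂μ = ∫ x, (X ^ k : ℝ[X]).toContinuousMap x ∂σ :=
      (hμ ⟨_, toContinuousMap_mem_polyGrowth (X ^ k)⟩).2.trans (hL ⟨X ^ k, rfl⟩)
    simpa using hk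

theorem exists_polynomial_ge_integral_lt_add (hσ : HasFiniteMoments σ)
    (hdet : IsMomentDeterminate σ) (f : polyGrowth) {ε : ℝ} (hε : 0 < ε) :
    ∃ p : ℝ[X], (∀ x, f.1 x ≤ p.eval x) ∧ ∫ x, p.eval x ∂σ < (∫ x, f.1 x ∂σ) + ε := by
  obtain ⟨⟨_, hp⟩, ⟨p, rfl⟩, hfp, hlt⟩ :=
    exists_majorant_lt_add_of_unique exists_mem_polynomialSubmodule_ge
      (fun _ hL => hσ.eq_integralFunctional_of_eqOn hdet hL) f hε
  exact ⟨p, hfp, hlt⟩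

end HasFiniteMoments

end Moments

section FejerRiesz

theorem eval_map_ofReal (p : ℝ[X]) (x : ℝ) : (p.map (algebraMap ℝ ℂ)).eval (x : ℂ) = p.eval x :=
  eval_map_apply (algebraMap ℝ ℂ) x

theorem eval_map_conj (r : ℂ[X]) (z : ℂ) : (r.map conj).eval z = conj (r.eval (conj z)) := by
  simpa using eval_map_apply conj (conj z) (p := r)

/-- The real polynomial `|X - z|² = (X - z)(X - conj z)`. -/
noncomputable def conjQuadratic (z : ℂ) : ℝ[X] :=
  X ^ 2 - C (2 * z.re) * X + C (‖z‖ ^ 2)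

theorem map_conjQuadratic (z : ℂ) :
    (conjQuadratic z).map (algebraMap ℝ ℂ) = (X - C z) * (X - C (conj z)) := by
  have hadd : ((2 * z.re : ℝ) : ℂ) = z + conj z := (Complex.add_conj z).symm
  have hmul : ((‖z‖ ^ 2 : ℝ) : ℂ) = z * conj z := by
    rw [Complex.mul_conj, Complex.normSq_eq_norm_sq]
  simp only [conjQuadratic, Polynomial.map_add, Polynomial.map_sub, Polynomial.map_mul,
    Polynomial.map_pow, map_X, map_C, Complex.coe_algebraMap, hadd, hmul]
  simp only [C_add, C_mul]
  ring

theorem eval_conjQuadratic (z : ℂ) (x : ℝ) : (conjQuadratic z).eval x = ‖(x : ℂ) - z‖ ^ 2 := by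
  rw [← Complex.normSq_eq_norm_sq, ← Complex.ofReal_inj, ← Complex.mul_conj, ← eval_map_ofReal,
    map_conjQuadratic]
  simp

theorem aeval_conjQuadratic_self (z : ℂ) : aeval z (conjQuadratic z) = 0 := by
  rw [← eval_map_algebraMap, map_conjQuadratic]
  simp

theorem natDegree_conjQuadratic (z : ℂ) : (conjQuadratic z).natDegree = 2 := by
  unfold conjQuadratic
  compute_degree!

theorem conjQuadratic_ne_zero (z : ℂ) : conjQuadratic z ≠ 0 := by
  intro h
  simpa [h] using natDegree_conjQuadratic z

theorem eval_nonneg_of_eval_mul_nonneg {p q : ℝ[X]} (hp : p ≠ 0) (hp₀ : ∀ x, 0 ≤ p.eval x)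
    (hpq : ∀ x, 0 ≤ (p * q).eval x) (x : ℝ) : 0 ≤ q.eval x := by
  have hdense : Dense {x | p.IsRoot x}ᶜ := (finite_setOfPred_isRoot hp).countable.dense_compl ℝ
  refine closure_minimal (fun y hy => ?_) (isClosed_le continuous_const q.continuous) (hdense x)
  have hpy : 0 < p.eval y := (hp₀ y).lt_of_ne' hy
  exact nonneg_of_mul_nonneg_right (by simpa using hpq y) hpy

theorem conjQuadratic_dvd_of_eval_nonneg {s : ℝ[X]} (hs : ∀ x, 0 ≤ s.eval x) {z : ℂ}
    (hz : aeval z s = 0) : conjQuadratic z ∣ s := by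
  by_cases him : z.im = 0
  · obtain ⟨a, rfl⟩ : ∃ a : ℝ, (a : ℂ) = z := ⟨z.re, Complex.ext rfl him.symm⟩
    have ha : s.eval a = 0 := by
      rw [← Complex.ofReal_inj, ← eval_map_ofReal, eval_map_algebraMap, hz, Complex.ofReal_zero]
    have hmin : IsLocalMin (fun x => s.eval x) a := .of_forall fun x => ha.trans_le (hs x)
    have hda : s.derivative.eval a = 0 := by simpa using hmin.deriv_eq_zero
    have hsq : conjQuadratic a = (X - C a) ^ 2 := by
      simp only [conjQuadratic, Complex.ofReal_re, C_mul, Complex.norm_real, Real.norm_eq_abs,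
        sq_abs, C_pow, C_ofNat]
      ring
    rcases eq_or_ne s 0 with rfl | hs₀
    · exact dvd_zero _
    rw [hsq, ← le_rootMultiplicity_iff hs₀]
    exact (one_lt_rootMultiplicity_iff_isRoot hs₀).2 ⟨ha, hda⟩
  · exact quadratic_dvd_of_aeval_eq_zero_im_ne_zero s hz him

theorem exists_map_eq_mul_map_conj_of_eval_nonneg {s : ℝ[X]} (hs : ∀ x, 0 ≤ s.eval x) :
    ∃ r : ℂ[X], s.map (algebraMap ℝ ℂ) = r * r.map conj := by
  induction hn : s.natDegree using Nat.strong_induction_on generalizing s with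
  | _ n ih =>
    by_cases hdeg : s.degree = 0
    · obtain ⟨c, rfl⟩ : ∃ c, s = C c := ⟨_, eq_C_of_degree_eq_zero hdeg⟩
      have hc : 0 ≤ c := by simpa using hs 0
      refine ⟨C (√c : ℂ), ?_⟩
      simp [← C_mul, ← Complex.ofReal_mul, Real.mul_self_sqrt hc]
    obtain ⟨z, hz⟩ := IsAlgClosed.exists_aeval_eq_zero ℂ s hdeg
    obtain ⟨q, rfl⟩ := conjQuadratic_dvd_of_eval_nonneg hs hz
    rcases eq_or_ne q 0 with rfl | hq₀
    · exact ⟨0, by simp⟩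
    have hq : ∀ x, 0 ≤ q.eval x :=
      eval_nonneg_of_eval_mul_nonneg (conjQuadratic_ne_zero z)
        (fun x => eval_conjQuadratic z x ▸ sq_nonneg _) hs
    have hlt : q.natDegree < n := by
      rw [← hn, natDegree_mul (conjQuadratic_ne_zero z) hq₀, natDegree_conjQuadratic]
      omega
    obtain ⟨r, hr⟩ := ih _ hlt hq rfl
    refine ⟨(X - C z) * r, ?_⟩
    simp only [Polynomial.map_mul, map_conjQuadratic, hr, Polynomial.map_sub, map_X, map_C]
    ring

theorem exists_norm_sq_eval_eq_one_le_norm_eval {s : ℝ[X]} (hs : ∀ x, 0 ≤ s.eval x) {z : ℂ}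
    (hz : aeval z s = 1) :
    ∃ r : ℂ[X], (∀ x : ℝ, ‖r.eval (x : ℂ)‖ ^ 2 = s.eval x) ∧ 1 ≤ ‖r.eval z‖ := by
  obtain ⟨r, hr⟩ := exists_map_eq_mul_map_conj_of_eval_nonneg hs
  have heval (w : ℂ) : (s.map (algebraMap ℝ ℂ)).eval w = r.eval w * conj (r.eval (conj w)) := by
    rw [hr, eval_mul, eval_map_conj]
  have hnorm (x : ℝ) : ‖r.eval (x : ℂ)‖ ^ 2 = s.eval x := by
    rw [← Complex.ofReal_inj, ← Complex.normSq_eq_norm_sq, ← Complex.mul_conj, ← eval_map_ofReal,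
      heval, Complex.conj_ofReal]
  -- The values of `r` and of its conjugate at `z` have product `s(z) = 1`.
  rcases le_total 1 ‖r.eval z‖ with h | h
  · exact ⟨r, hnorm, h⟩
  · refine ⟨r.map conj, fun x => by simp [eval_map_conj, hnorm], ?_⟩
    have hprod : ‖r.eval z‖ * ‖(r.map conj).eval z‖ = 1 := by
      rw [eval_map_conj, ← norm_mul, ← heval, eval_map_algebraMap, hz, norm_one]
    exact hprod.ge.trans (mul_le_of_le_one_left (norm_nonneg _) h)

theorem ofReal_sub_ne_zero {z : ℂ} (hz : z.im ≠ 0) (x : ℝ) : (x : ℂ) - z ≠ 0 := fun h =>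
  hz (by simpa using congrArg Complex.im h)

theorem exists_norm_sq_inv_sub_eval_le_div {s : ℝ[X]} (hs : ∀ x, 0 ≤ s.eval x) {z : ℂ}
    (hz : aeval z s = 1) (him : z.im ≠ 0) :
    ∃ Q : ℂ[X], ∀ x : ℝ, ‖((x : ℂ) - z)⁻¹ - Q.eval (x : ℂ)‖ ^ 2 ≤ s.eval x / ‖(x : ℂ) - z‖ ^ 2 := by
  obtain ⟨r, hr, hrz⟩ := exists_norm_sq_eval_eq_one_le_norm_eval hs hz
  have hrz₀ : r.eval z ≠ 0 := norm_pos_iff.1 (one_pos.trans_le hrz)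
  obtain ⟨Q, hQ⟩ : X - C z ∣ 1 - C (r.eval z)⁻¹ * r := by
    rw [dvd_iff_isRoot]
    simp [hrz₀]
  refine ⟨Q, fun x => ?_⟩
  have hxz := ofReal_sub_ne_zero him x
  have hQx : 1 - (r.eval z)⁻¹ * r.eval (x : ℂ) = (x - z) * Q.eval (x : ℂ) := by
    simpa using congrArg (eval (x : ℂ)) hQ
  have heq : ((x : ℂ) - z)⁻¹ - Q.eval (x : ℂ) = r.eval (x : ℂ) / (x - z) / r.eval z := by
    field_simp at hQx ⊢
    linear_combination hQx
  rw [heq, norm_div, norm_div, div_pow, div_pow, hr]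
  exact div_le_self (div_nonneg (hs x) (sq_nonneg _)) (one_le_pow₀ hrz)

theorem exists_norm_sq_inv_sub_eval_le_add {p : ℝ[X]} {z : ℂ} (him : z.im ≠ 0)
    (hp : ∀ x : ℝ, 0 ≤ p.eval x + (‖(x : ℂ) - z‖ ^ 2)⁻¹) :
    ∃ Q : ℂ[X], ∀ x : ℝ,
      ‖((x : ℂ) - z)⁻¹ - Q.eval (x : ℂ)‖ ^ 2 ≤ p.eval x + (‖(x : ℂ) - z‖ ^ 2)⁻¹ := by
  have hpos (x : ℝ) : 0 < ‖(x : ℂ) - z‖ ^ 2 :=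
    pow_pos (norm_pos_iff.2 (ofReal_sub_ne_zero him x)) 2
  have heval (x : ℝ) : (1 + conjQuadratic z * p).eval x =
      (p.eval x + (‖(x : ℂ) - z‖ ^ 2)⁻¹) * ‖(x : ℂ) - z‖ ^ 2 := by
    rw [add_mul, inv_mul_cancel₀ (hpos x).ne', eval_add, eval_mul, eval_conjQuadratic, eval_one]
    ring
  obtain ⟨Q, hQ⟩ := exists_norm_sq_inv_sub_eval_le_div (s := 1 + conjQuadratic z * p) (z := z)
    (fun x => heval x ▸ mul_nonneg (hp x) (hpos x).le) (by simp [aeval_conjQuadratic_self]) him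
  exact ⟨Q, fun x => (hQ x).trans_eq ((div_eq_iff (hpos x).ne').2 (heval x))⟩

end FejerRiesz

section Resolvent

theorem memLp_boundedContinuousFunction_mul {α 𝕜 : Type*} [TopologicalSpace α] [MeasurableSpace α]
    [OpensMeasurableSpace α] [RCLike 𝕜] {μ : Measure α} {p : ENNReal} {g : α → 𝕜}
    (hg : MemLp g p μ) (h : α →ᵇ 𝕜) : MemLp (⇑h * g) p μ :=
  hg.of_le_mul (h.continuous.aestronglyMeasurable.mul hg.aestronglyMeasurable) <|
    .of_forall fun x => by
      rw [Pi.mul_apply, norm_mul]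
      gcongr
      exact h.norm_coe_le_norm x

theorem norm_integral_mul_sq_le {α 𝕜 : Type*} [MeasurableSpace α] [RCLike 𝕜] {μ : Measure α}
    {f g : α → 𝕜} (hf : MemLp f 2 μ) (hg : MemLp g 2 μ) :
    ‖∫ x, f x * g x ∂μ‖ ^ 2 ≤ (∫ x, ‖f x‖ ^ 2 ∂μ) * ∫ x, ‖g x‖ ^ 2 ∂μ := by
  have hHolder : ∫ x, ‖f x‖ * ‖g x‖ ∂μ ≤ √(∫ x, ‖f x‖ ^ 2 ∂μ) * √(∫ x, ‖g x‖ ^ 2 ∂μ) := by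
    simpa [Real.sqrt_eq_rpow] using integral_mul_norm_le_Lp_mul_Lq Real.HolderConjugate.two_two
      (by simpa using hf) (by simpa using hg)
  calc ‖∫ x, f x * g x ∂μ‖ ^ 2 ≤ (∫ x, ‖f x‖ * ‖g x‖ ∂μ) ^ 2 := by
        gcongr
        simpa only [norm_mul] using norm_integral_le_integral_norm fun x => f x * g x
    _ ≤ (√(∫ x, ‖f x‖ ^ 2 ∂μ) * √(∫ x, ‖g x‖ ^ 2 ∂μ)) ^ 2 := by gcongr
    _ = (∫ x, ‖f x‖ ^ 2 ∂μ) * ∫ x, ‖g x‖ ^ 2 ∂μ := by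
        rw [mul_pow, Real.sq_sqrt (by positivity), Real.sq_sqrt (by positivity)]

theorem norm_inv_ofReal_sub_le {z : ℂ} (hz : z.im ≠ 0) (x : ℝ) :
    ‖((x : ℂ) - z)⁻¹‖ ≤ |z.im|⁻¹ := by
  rw [norm_inv]
  exact inv_anti₀ (abs_pos.2 hz) (by simpa using Complex.abs_im_le_norm ((x : ℂ) - z))

theorem continuous_inv_ofReal_sub {z : ℂ} (hz : z.im ≠ 0) :
    Continuous fun x : ℝ => ((x : ℂ) - z)⁻¹ :=
  (Complex.continuous_ofReal.sub continuous_const).inv₀ (ofReal_sub_ne_zero hz)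

/-- The function `x ↦ (x - z)⁻¹` on the real line, for a nonreal `z`. -/
noncomputable def boundedResolvent {z : ℂ} (hz : z.im ≠ 0) : ℝ →ᵇ ℂ :=
  .ofNormedAddCommGroup (fun x => ((x : ℂ) - z)⁻¹) (continuous_inv_ofReal_sub hz) |z.im|⁻¹
    (norm_inv_ofReal_sub_le hz)

theorem boundedResolvent_apply {z : ℂ} (hz : z.im ≠ 0) (x : ℝ) :
    boundedResolvent hz x = ((x : ℂ) - z)⁻¹ := rfl

theorem HasFiniteMoments.exists_polynomial_integral_norm_sq_resolvent_sub_lt {σ : Measure ℝ}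
    (hσ : HasFiniteMoments σ) (hdet : IsMomentDeterminate σ) {z : ℂ} (hz : z.im ≠ 0) {ε : ℝ}
    (hε : 0 < ε) :
    ∃ Q : ℂ[X], ∫ x : ℝ, ‖boundedResolvent hz x - Q.eval (x : ℂ)‖ ^ 2 ∂σ < ε := by
  let f : polyGrowth := ⟨⟨fun x => -‖boundedResolvent hz x‖ ^ 2, by fun_prop⟩,
    mem_polyGrowth_of_bounded (c := ‖boundedResolvent hz‖ ^ 2) fun x => by
      simpa using pow_le_pow_left₀ (norm_nonneg _) ((boundedResolvent hz).norm_coe_le_norm x) 2⟩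
  have hf (x : ℝ) : f.1 x = -(‖(x : ℂ) - z‖ ^ 2)⁻¹ := by
    simp [f, boundedResolvent_apply]
  obtain ⟨p, hfp, hp⟩ := hσ.exists_polynomial_ge_integral_lt_add hdet f hε
  have hadd (x : ℝ) : p.eval x + (‖(x : ℂ) - z‖ ^ 2)⁻¹ = p.eval x - f.1 x := by
    rw [hf, sub_neg_eq_add]
  obtain ⟨Q, hQ⟩ := exists_norm_sq_inv_sub_eval_le_add hz
    fun x => (sub_nonneg.2 (hfp x)).trans_eq (hadd x).symm
  refine ⟨Q, ?_⟩
  calc ∫ x : ℝ, ‖boundedResolvent hz x - Q.eval (x : ℂ)‖ ^ 2 ∂σ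
      ≤ ∫ x, (p.eval x - f.1 x) ∂σ :=
        integral_mono_of_nonneg (.of_forall fun _ => sq_nonneg _)
          ((hσ.integrable_eval p).sub (hσ.integrable_polyGrowth f))
          (.of_forall fun x => (hQ x).trans_eq (hadd x))
    _ = ∫ x, p.eval x ∂σ - ∫ x, f.1 x ∂σ :=
        integral_sub (hσ.integrable_eval p) (hσ.integrable_polyGrowth f)
    _ < ε := by linarith

end Resolvent

section OrthogonalComplement

/-- `g` is a square-integrable function orthogonal to all polynomials. As the polynomials are stable
under complex conjugation, the bilinear pairing `∫ g Q` may be used instead of the inner product. -/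
structure OrthogonalToPolynomials (σ : Measure ℝ) (g : ℝ → ℂ) : Prop where
  memLp : MemLp g 2 σ
  integral_mul_eval : ∀ Q : ℂ[X], ∫ x : ℝ, g x * Q.eval (x : ℂ) ∂σ = 0

variable {σ : Measure ℝ}

theorem HasFiniteMoments.integrable_mul_eval (hσ : HasFiniteMoments σ) {g : ℝ → ℂ}
    (hg : MemLp g 2 σ) (Q : ℂ[X]) : Integrable (fun x : ℝ => g x * Q.eval (x : ℂ)) σ :=
  hg.integrable_mul (hσ.memLp_eval Q)

namespace OrthogonalToPolynomials

variable {g g₁ g₂ : ℝ → ℂ}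

theorem add (hσ : HasFiniteMoments σ) (h₁ : OrthogonalToPolynomials σ g₁)
    (h₂ : OrthogonalToPolynomials σ g₂) : OrthogonalToPolynomials σ (g₁ + g₂) where
  memLp := h₁.memLp.add h₂.memLp
  integral_mul_eval Q := by
    simp only [Pi.add_apply, add_mul]
    rw [integral_add (hσ.integrable_mul_eval h₁.memLp Q) (hσ.integrable_mul_eval h₂.memLp Q),
      h₁.integral_mul_eval, h₂.integral_mul_eval, add_zero]

theorem const_mul (hg : OrthogonalToPolynomials σ g) (c : ℂ) :
    OrthogonalToPolynomials σ fun x => c * g x where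
  memLp := hg.memLp.const_mul c
  integral_mul_eval Q := by
    simp only [mul_assoc, integral_const_mul, hg.integral_mul_eval, mul_zero]

theorem star (hg : OrthogonalToPolynomials σ g) : OrthogonalToPolynomials σ (star g) where
  memLp := hg.memLp.star
  integral_mul_eval Q := by
    have hQ (x : ℝ) : Q.eval (x : ℂ) = conj ((Q.map conj).eval (x : ℂ)) := by
      simp [eval_map_conj]
    simp only [hQ, Pi.star_apply, RCLike.star_def, ← map_mul, integral_conj, hg.integral_mul_eval,
      map_zero]

theorem integral_mul_resolvent (hg : OrthogonalToPolynomials σ g) (hσ : HasFiniteMoments σ)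
    (hdet : IsMomentDeterminate σ) {z : ℂ} (hz : z.im ≠ 0) :
    ∫ x, g x * boundedResolvent hz x ∂σ = 0 := by
  have := hσ.isFiniteMeasure
  have hr : MemLp (boundedResolvent hz) 2 σ :=
    .of_bound (boundedResolvent hz).continuous.aestronglyMeasurable _
      (.of_forall (boundedResolvent hz).norm_coe_le_norm)
  set I := ∫ x, g x * boundedResolvent hz x ∂σ
  set M := ∫ x, ‖g x‖ ^ 2 ∂σ
  have hM : 0 < M + 1 := add_pos_of_nonneg_of_pos (integral_nonneg fun _ => sq_nonneg _) one_pos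
  have hle (Q : ℂ[X]) :
      ‖I‖ ^ 2 ≤ M * ∫ x : ℝ, ‖boundedResolvent hz x - Q.eval (x : ℂ)‖ ^ 2 ∂σ := by
    have hsub : ∫ x : ℝ, g x * (boundedResolvent hz x - Q.eval (x : ℂ)) ∂σ = I := by
      have hgr : Integrable (fun x => g x * boundedResolvent hz x) σ := hg.memLp.integrable_mul hr
      simp only [mul_sub]
      rw [integral_sub hgr (hσ.integrable_mul_eval hg.memLp Q), hg.integral_mul_eval, sub_zero]
    exact hsub ▸ norm_integral_mul_sq_le hg.memLp (hr.sub (hσ.memLp_eval Q))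
  by_contra hne
  obtain ⟨Q, hQ⟩ := hσ.exists_polynomial_integral_norm_sq_resolvent_sub_lt hdet hz
    (ε := ‖I‖ ^ 2 / (M + 1)) (div_pos (by positivity) hM)
  rw [lt_div_iff₀ hM] at hQ
  have hQ₀ : 0 ≤ ∫ x : ℝ, ‖boundedResolvent hz x - Q.eval (x : ℂ)‖ ^ 2 ∂σ :=
    integral_nonneg fun _ => sq_nonneg _
  linarith [hle Q]

theorem resolvent_mul (hg : OrthogonalToPolynomials σ g) (hσ : HasFiniteMoments σ)
    (hdet : IsMomentDeterminate σ) {z : ℂ} (hz : z.im ≠ 0) :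
    OrthogonalToPolynomials σ (⇑(boundedResolvent hz) * g) where
  memLp := memLp_boundedContinuousFunction_mul hg.memLp _
  integral_mul_eval Q := by
    obtain ⟨Q₁, hQ₁⟩ : X - C z ∣ Q - C (Q.eval z) := X_sub_C_dvd_sub_C_eval
    have heval (x : ℝ) : (⇑(boundedResolvent hz) * g) x * Q.eval (x : ℂ) =
        Q.eval z * (g x * boundedResolvent hz x) + g x * Q₁.eval (x : ℂ) := by
      have hx : Q.eval (x : ℂ) = Q.eval z + (x - z) * Q₁.eval (x : ℂ) := by
        simpa [sub_eq_iff_eq_add'] using congrArg (eval (x : ℂ)) hQ₁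
      have := ofReal_sub_ne_zero hz x
      rw [hx, Pi.mul_apply, boundedResolvent_apply]
      field_simp
    have hint : Integrable (fun x => g x * boundedResolvent hz x) σ := by
      simpa only [Pi.mul_def, mul_comm] using hσ.integrable_of_memLp_two
        (memLp_boundedContinuousFunction_mul hg.memLp (boundedResolvent hz))
    simp only [heval]
    rw [integral_add (hint.const_mul _) (hσ.integrable_mul_eval hg.memLp Q₁), integral_const_mul,
      hg.integral_mul_resolvent hσ hdet hz, hg.integral_mul_eval, mul_zero, add_zero]

end OrthogonalToPolynomials

/-- The bounded continuous functions that multiply the orthogonal complement of the polynomials into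
itself. -/
noncomputable def orthogonalMultipliers (hσ : HasFiniteMoments σ) :
    StarSubalgebra ℂ (ℝ →ᵇ ℂ) where
  carrier := {h | ∀ g, OrthogonalToPolynomials σ g → OrthogonalToPolynomials σ (⇑h * g)}
  mul_mem' ha hb g hg := by simpa [mul_assoc] using ha _ (hb g hg)
  add_mem' ha hb g hg := by simpa [add_mul] using (ha g hg).add hσ (hb g hg)
  algebraMap_mem' c g hg := hg.const_mul c
  star_mem' ha g hg := by simpa [mul_comm] using (ha _ hg.star).star

end OrthogonalComplement

section Uniqueness

variable {X 𝕜 : Type*} [TopologicalSpace X] [PolishSpace X] [MeasurableSpace X] [BorelSpace X]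
  [RCLike 𝕜] {μ : Measure X} {A : StarSubalgebra 𝕜 (X →ᵇ 𝕜)}

theorem ae_eq_of_forall_mem_subalgebra_integral_mul_eq
    (hA : (A.map (BoundedContinuousFunction.toContinuousMapStarₐ 𝕜)).SeparatesPoints)
    {u v : X → ℝ} (hu : Integrable u μ) (hv : Integrable v μ) (hu₀ : 0 ≤ u) (hv₀ : 0 ≤ v)
    (h : ∀ f ∈ A, ∫ x, (u x : 𝕜) * f x ∂μ = ∫ x, (v x : 𝕜) * f x ∂μ) : u =ᵐ[μ] v := by
  have hmeas {w : X → ℝ} (hw : Integrable w μ) : AEMeasurable (fun x => ENNReal.ofReal (w x)) μ :=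
    hw.1.aemeasurable.ennreal_ofReal
  have hintegral {w : X → ℝ} (hw : Integrable w μ) (hw₀ : 0 ≤ w) (f : X → 𝕜) :
      ∫ x, f x ∂(μ.withDensity fun x => ENNReal.ofReal (w x)) = ∫ x, (w x : 𝕜) * f x ∂μ := by
    rw [integral_withDensity_eq_integral_toReal_smul₀ (hmeas hw)
      (.of_forall fun _ => ENNReal.ofReal_lt_top)]
    simp [ENNReal.toReal_ofReal (hw₀ _), RCLike.real_smul_eq_coe_mul]
  have := isFiniteMeasure_withDensity_ofReal hu.2
  have := isFiniteMeasure_withDensity_ofReal hv.2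
  have hdensity := ext_of_forall_mem_subalgebra_integral_eq_of_polish hA fun f hf =>
    (hintegral hu hu₀ f).trans ((h f hf).trans (hintegral hv hv₀ f).symm)
  filter_upwards [(withDensity_eq_iff (hmeas hu) (hmeas hv) hu.lintegral_lt_top.ne).1 hdensity]
    with x hx
  exact (ENNReal.ofReal_eq_ofReal_iff (hu₀ x) (hv₀ x)).1 hx

theorem ae_eq_zero_of_forall_mem_subalgebra_integral_mul_eq_zero
    (hA : (A.map (BoundedContinuousFunction.toContinuousMapStarₐ 𝕜)).SeparatesPoints)
    {g : X → ℝ} (hg : Integrable g μ) (h : ∀ f ∈ A, ∫ x, (g x : 𝕜) * f x ∂μ = 0) :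
    g =ᵐ[μ] 0 := by
  have hbdd {w : X → ℝ} (hw : Integrable w μ) (f : X →ᵇ 𝕜) :
      Integrable (fun x => (w x : 𝕜) * f x) μ :=
    hw.ofReal.mul_bdd f.continuous.aestronglyMeasurable (.of_forall f.norm_coe_le_norm)
  have heq : (fun x => max (g x) 0) =ᵐ[μ] fun x => max (-g x) 0 := by
    refine ae_eq_of_forall_mem_subalgebra_integral_mul_eq hA hg.pos_part hg.neg_part
      (fun _ => le_max_right _ _) (fun _ => le_max_right _ _) fun f hf => ?_
    rw [← sub_eq_zero, ← integral_sub (hbdd hg.pos_part f) (hbdd hg.neg_part f), ← h f hf]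
    refine integral_congr_ae (.of_forall fun x => ?_)
    simp only [← sub_mul, ← RCLike.ofReal_sub, max_zero_sub_max_neg_zero_eq_self]
  filter_upwards [heq] with x hx
  rw [← max_zero_sub_max_neg_zero_eq_self (g x)]
  simp [hx]

end Uniqueness

section Density

variable {σ : Measure ℝ}

theorem separatesPoints_orthogonalMultipliers (hσ : HasFiniteMoments σ)
    (hdet : IsMomentDeterminate σ) :
    ((orthogonalMultipliers hσ).map
      (BoundedContinuousFunction.toContinuousMapStarₐ ℂ)).SeparatesPoints := by
  intro x y hxy
  have hI : Complex.I.im ≠ 0 := by simp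
  refine ⟨_, ⟨_, ⟨boundedResolvent hI, fun g hg => hg.resolvent_mul hσ hdet hI, rfl⟩, rfl⟩, ?_⟩
  simpa [boundedResolvent_apply] using hxy

theorem orthogonalToPolynomials_ofReal (hσ : HasFiniteMoments σ) {g : ℝ → ℝ} (hg : MemLp g 2 σ)
    (h : ∀ p : ℝ[X], ∫ x, g x * p.eval x ∂σ = 0) :
    OrthogonalToPolynomials σ fun x => (g x : ℂ) := by
  refine ⟨hg.ofReal, fun Q => ?_⟩
  induction Q using Polynomial.induction_on' with
  | add P Q hP hQ =>
    have hint (R : ℂ[X]) : Integrable (fun x : ℝ => (g x : ℂ) * R.eval (x : ℂ)) σ :=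
      hσ.integrable_mul_eval hg.ofReal R
    simp only [eval_add, mul_add]
    rw [integral_add (hint P) (hint Q), hP, hQ, add_zero]
  | monomial k c =>
    have hk : ∫ x, g x * x ^ k ∂σ = 0 := by simpa using h (X ^ k)
    calc ∫ x : ℝ, (g x : ℂ) * (monomial k c).eval (x : ℂ) ∂σ
        = ∫ x : ℝ, c * ((g x * x ^ k : ℝ) : ℂ) ∂σ := by
          congr with x
          simp [mul_left_comm]
      _ = 0 := by
          rw [integral_const_mul, integral_complex_ofReal, hk, Complex.ofReal_zero, mul_zero]

theorem ae_eq_zero_of_forall_integral_mul_eval_eq_zero (hσ : HasFiniteMoments σ)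
    (hdet : IsMomentDeterminate σ) {g : ℝ → ℝ} (hg : MemLp g 2 σ)
    (h : ∀ p : ℝ[X], ∫ x, g x * p.eval x ∂σ = 0) : g =ᵐ[σ] 0 := by
  refine ae_eq_zero_of_forall_mem_subalgebra_integral_mul_eq_zero (𝕜 := ℂ)
    (separatesPoints_orthogonalMultipliers hσ hdet) (hσ.integrable_of_memLp_two hg) fun f hf => ?_
  have hf := (hf _ (orthogonalToPolynomials_ofReal hσ hg h)).integral_mul_eval 1
  simpa [mul_comm] using hf

/-- The polynomials as elements of `L²(σ)`. -/
noncomputable def polynomialToLp (hσ : HasFiniteMoments σ) : ℝ[X] →ₗ[ℝ] Lp ℝ 2 σ where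
  toFun p := (hσ.memLp_eval p).toLp
  map_add' p q := by
    simp only [eval_add]
    exact MemLp.toLp_add _ _
  map_smul' c p := by
    simp only [eval_smul]
    exact MemLp.toLp_const_smul c _

theorem coeFn_polynomialToLp (hσ : HasFiniteMoments σ) (p : ℝ[X]) :
    polynomialToLp hσ p =ᵐ[σ] fun x => p.eval x :=
  (hσ.memLp_eval p).coeFn_toLp

theorem inner_polynomialToLp (hσ : HasFiniteMoments σ) (p : ℝ[X]) (g : Lp ℝ 2 σ) :
    inner ℝ (polynomialToLp hσ p) g = ∫ x, g x * p.eval x ∂σ := by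
  rw [L2.inner_def]
  refine integral_congr_ae ?_
  filter_upwards [coeFn_polynomialToLp hσ p] with x hx
  simp [hx]

theorem dense_range_polynomialToLp (hσ : HasFiniteMoments σ) (hdet : IsMomentDeterminate σ) :
    Dense (LinearMap.range (polynomialToLp hσ) : Set (Lp ℝ 2 σ)) := by
  rw [Submodule.dense_iff_topologicalClosure_eq_top, Submodule.topologicalClosure_eq_top_iff,
    Submodule.eq_bot_iff]
  intro g hg
  refine (Lp.eq_zero_iff_ae_eq_zero).2
    (ae_eq_zero_of_forall_integral_mul_eval_eq_zero hσ hdet (Lp.memLp g) fun p => ?_)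
  rw [← inner_polynomialToLp hσ]
  exact (Submodule.mem_orthogonal _ _).1 hg _ ⟨p, rfl⟩

end Density

end

/-- If `σ` is a measure on `ℝ` with all moments finite which is the solution of a
determinate moment problem (any measure with the same moments equals `σ`), then the
polynomial functions are dense in `L²(σ)`. -/
theorem polynomials_dense_of_determinate (σ : Measure ℝ)
    (hmom : ∀ k : ℕ, Integrable (fun u : ℝ => |u| ^ k) σ)
    (hdet : ∀ μ : Measure ℝ,
      (∀ k : ℕ, Integrable (fun u : ℝ => |u| ^ k) μ) →
      (∀ k : ℕ, ∫ u, u ^ k ∂μ = ∫ u, u ^ k ∂σ) → μ = σ) :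
    Dense {f : Lp ℝ 2 σ | ∃ p : Polynomial ℝ, ∀ᵐ u ∂σ, f u = p.eval u} := by
  refine (dense_range_polynomialToLp hmom hdet).mono ?_
  rintro _ ⟨p, rfl⟩
  exact ⟨p, coeFn_polynomialToLp hmom p⟩
end
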